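/- The functional J attains its minimum over U = (𝓗₀¹(Ω) ∩ L^{2q}(Ω)) ∖ {0}: there exists z ∈ U with J(z) = inf{ J(u) : u ∈ U }; moreover the minimizer can be chosen nonnegative a.e. on Ω (since J(|u|) = J(u) for all u ∈ U). -/

import Mathlib

open MeasureTheory Set Filter

noncomputable section

/-- The open unit square `Ω = (0,1) × (0,1)` in `ℝ²`. -/
def Omega : Set (ℝ × ℝ) := Ioo (0:ℝ) 1 ×ˢ Ioo (0:ℝ) 1

/-- Test functions on a set `s`: smooth with compact support contained in `s`. -/
def IsTestOn (s : Set (ℝ × ℝ)) (φ : ℝ × ℝ → ℝ) : Prop :=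
  ContDiff ℝ (⊤ : ℕ∞) φ ∧ HasCompactSupport φ ∧ tsupport φ ⊆ s

/-- Classical partial derivative in the `x`-direction. -/
def pdx (φ : ℝ × ℝ → ℝ) (p : ℝ × ℝ) : ℝ := fderiv ℝ φ p (1, 0)

/-- Classical partial derivative in the `y`-direction. -/
def pdy (φ : ℝ × ℝ → ℝ) (p : ℝ × ℝ) : ℝ := fderiv ℝ φ p (0, 1)

/-- `g` is a weak `x`-partial derivative of `u` on `s`. -/
def HasWeakDerivXOn (s : Set (ℝ × ℝ)) (u g : ℝ × ℝ → ℝ) : Prop :=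
  LocallyIntegrableOn u s volume ∧ LocallyIntegrableOn g s volume ∧
  ∀ φ : ℝ × ℝ → ℝ, IsTestOn s φ →
    ∫ p in s, u p * pdx φ p = - ∫ p in s, g p * φ p

/-- `g` is a weak `y`-partial derivative of `u` on `s`. -/
def HasWeakDerivYOn (s : Set (ℝ × ℝ)) (u g : ℝ × ℝ → ℝ) : Prop :=
  LocallyIntegrableOn u s volume ∧ LocallyIntegrableOn g s volume ∧
  ∀ φ : ℝ × ℝ → ℝ, IsTestOn s φ →
    ∫ p in s, u p * pdy φ p = - ∫ p in s, g p * φ p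

/-- Test functions on `Ω`. -/
def IsTest (φ : ℝ × ℝ → ℝ) : Prop := IsTestOn Omega φ

/-- Membership in the weighted Sobolev space `𝓗¹(Ω)`, with weak derivatives `gx, gy`:
`u ∈ L²(Ω)`, `gx = ∂ₓu`, `gy = ∂_y u` weakly, and `y^α₁ gx, x^α₂ gy ∈ L²(Ω)`. -/
structure MemH1 (α₁ α₂ : ℝ) (u gx gy : ℝ × ℝ → ℝ) : Prop where
  memL2 : MemLp u 2 (volume.restrict Omega)
  weakX : HasWeakDerivXOn Omega u gx
  weakY : HasWeakDerivYOn Omega u gy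
  wgx : MemLp (fun p => p.2 ^ α₁ * gx p) 2 (volume.restrict Omega)
  wgy : MemLp (fun p => p.1 ^ α₂ * gy p) 2 (volume.restrict Omega)

/-- The `𝓗¹(Ω)` norm of `u` (with weak derivatives `gx, gy`). -/
def H1Norm (α₁ α₂ : ℝ) (u gx gy : ℝ × ℝ → ℝ) : ℝ :=
  Real.sqrt ((∫ p in Omega, (u p) ^ 2) +
    (∫ p in Omega, (p.2 ^ α₁ * gx p) ^ 2) +
    (∫ p in Omega, (p.1 ^ α₂ * gy p) ^ 2))

/-- Membership in `𝓗₀¹(Ω)`: member of `𝓗¹(Ω)` approximable in the `𝓗¹` norm by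
test functions. -/
def MemH10 (α₁ α₂ : ℝ) (u gx gy : ℝ × ℝ → ℝ) : Prop :=
  MemH1 α₁ α₂ u gx gy ∧
  ∀ ε : ℝ, 0 < ε → ∃ φ : ℝ × ℝ → ℝ, IsTest φ ∧
    H1Norm α₁ α₂ (fun p => u p - φ p) (fun p => gx p - pdx φ p)
      (fun p => gy p - pdy φ p) < ε

/-- Membership in `H₀(Ω) = {u ∈ 𝓗₀¹(Ω) : ∫_Ω V u² < ∞}`. -/
def MemH0 (α₁ α₂ : ℝ) (V u gx gy : ℝ × ℝ → ℝ) : Prop :=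
  MemH10 α₁ α₂ u gx gy ∧
  IntegrableOn (fun p => V p * (u p) ^ 2) Omega volume

/-- The bilinear form `a(u,v)` associated with the sub-elliptic operator with potential `V`. -/
def aForm (α₁ α₂ : ℝ) (V u gx gy v hx hy : ℝ × ℝ → ℝ) : ℝ :=
  ∫ p in Omega, ((p.2 ^ α₁ * gx p) * (p.2 ^ α₁ * hx p) +
    (p.1 ^ α₂ * gy p) * (p.1 ^ α₂ * hy p) + V p * u p * v p)

/-- The bilinear form `a₁(u,v)` (no potential). -/
def a1Form (α₁ α₂ : ℝ) (u gx gy v hx hy : ℝ × ℝ → ℝ) : ℝ :=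
  ∫ p in Omega, ((p.2 ^ α₁ * gx p) * (p.2 ^ α₁ * hx p) +
    (p.1 ^ α₂ * gy p) * (p.1 ^ α₂ * hy p))

/-- Membership in `S_p = {V ∈ L^p(Ω) : V ≥ 0 a.e., ‖V‖_{L^p(Ω)} ≤ M}`. -/
def MemSp (ppow M : ℝ) (V : ℝ × ℝ → ℝ) : Prop :=
  MemLp V (ENNReal.ofReal ppow) (volume.restrict Omega) ∧
  (∀ᵐ p ∂(volume.restrict Omega), 0 ≤ V p) ∧
  eLpNorm V (ENNReal.ofReal ppow) (volume.restrict Omega) ≤ ENNReal.ofReal M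

/-- `u` (with weak derivatives `gx, gy`) is an eigenfunction of the sub-elliptic operator
with potential `V` for the eigenvalue `lam`. -/
def IsEigenfun (α₁ α₂ : ℝ) (V : ℝ × ℝ → ℝ) (lam : ℝ) (u gx gy : ℝ × ℝ → ℝ) : Prop :=
  MemH0 α₁ α₂ V u gx gy ∧
  ∀ v hx hy : ℝ × ℝ → ℝ, MemH0 α₁ α₂ V v hx hy →
    aForm α₁ α₂ V u gx gy v hx hy = lam * ∫ p in Omega, u p * v p

/-- The first eigenvalue `λ₁(V) = inf { a(u,u) : u ∈ H₀(Ω), ‖u‖_{L²} = 1 }`. -/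
def lam1 (α₁ α₂ : ℝ) (V : ℝ × ℝ → ℝ) : ℝ :=
  sInf { r | ∃ u gx gy : ℝ × ℝ → ℝ, MemH0 α₁ α₂ V u gx gy ∧
    (∫ p in Omega, (u p) ^ 2) = 1 ∧ r = aForm α₁ α₂ V u gx gy u gx gy }

/-- `sup { a(u,u) : u ∈ span(φ), ‖u‖_{L²(Ω)} = 1 }` for a finite family `φ` with
weak derivatives `φx, φy`. -/
def rayleighSup (α₁ α₂ : ℝ) (V : ℝ × ℝ → ℝ) {k : ℕ} (φ φx φy : Fin k → ℝ × ℝ → ℝ) : ℝ :=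
  sSup { s | ∃ c : Fin k → ℝ,
    (∫ p in Omega, (∑ i, c i * φ i p) ^ 2) = 1 ∧
    s = aForm α₁ α₂ V (fun p => ∑ i, c i * φ i p) (fun p => ∑ i, c i * φx i p)
      (fun p => ∑ i, c i * φy i p) (fun p => ∑ i, c i * φ i p)
      (fun p => ∑ i, c i * φx i p) (fun p => ∑ i, c i * φy i p) }

/-- The set of values `sup { a(u,u) : u ∈ E, ‖u‖ = 1 }` over `k`-dimensional
subspaces `E` of `H₀(Ω)` (represented by `L²(Ω)`-linearly independent families of
`k` elements of `H₀(Ω)`). -/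
def minmaxSet (α₁ α₂ : ℝ) (V : ℝ × ℝ → ℝ) (k : ℕ) : Set ℝ :=
  { r | ∃ φ φx φy : Fin k → ℝ × ℝ → ℝ,
      (∀ i, MemH0 α₁ α₂ V (φ i) (φx i) (φy i)) ∧
      (∀ c : Fin k → ℝ, (∀ᵐ p ∂(volume.restrict Omega), ∑ i, c i * φ i p = 0) → c = 0) ∧
      r = rayleighSup α₁ α₂ V φ φx φy }

/-- The `k`-th eigenvalue via the min-max principle. -/
def lamk (α₁ α₂ : ℝ) (V : ℝ × ℝ → ℝ) (k : ℕ) : ℝ := sInf (minmaxSet α₁ α₂ V k)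

/-- Membership in `U = (𝓗₀¹(Ω) ∩ L^{2q}(Ω)) \ {0}`. -/
def MemU (α₁ α₂ qe : ℝ) (u gx gy : ℝ × ℝ → ℝ) : Prop :=
  MemH10 α₁ α₂ u gx gy ∧
  MemLp u (ENNReal.ofReal (2 * qe)) (volume.restrict Omega) ∧
  ¬ (∀ᵐ p ∂(volume.restrict Omega), u p = 0)

/-- The functional `J(u) = (a₁(u,u) + M ‖u‖_{L^{2q}(Ω)}²) / ‖u‖_{L²(Ω)}²`. -/
def Jfun (α₁ α₂ M qe : ℝ) (u gx gy : ℝ × ℝ → ℝ) : ℝ :=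
  (a1Form α₁ α₂ u gx gy u gx gy +
    M * (∫ p in Omega, |u p| ^ (2 * qe)) ^ (1 / qe)) / (∫ p in Omega, (u p) ^ 2)

/-!
The proof is the direct method. A normalized minimizing sequence is bounded in a Hilbert space,
hence converges weakly along a subsequence, and the energy is weakly lower semicontinuous. What has
to be shown is that the constraint `‖u‖ = 1` survives in the limit. Since the inverses of the
weights are square integrable (this is `α₁, α₂ < 1 / 2`), the energy controls the gradient in `L¹`;
comparing a function with its averages over small balls then turns weak convergence into
convergence in `L¹`, and the bound in `L^{2q}`, `2q > 2`, upgrades this to convergence in `L²`.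
Replacing a minimizer by its absolute value does not increase the energy, as one sees by
approximating `|u|` with `√(u² + ε²) - ε`.
-/

open scoped Topology ENNReal RealInnerProductSpace

section WeakConvergence

variable {H : Type*} [NormedAddCommGroup H] [InnerProductSpace ℝ H]

/-- Weak convergence of a sequence in a real Hilbert space, tested against inner products. -/
def WeakTendsto (x : ℕ → H) (y : H) : Prop :=
  ∀ w, Tendsto (fun n => ⟪x n, w⟫) atTop (𝓝 ⟪y, w⟫)

theorem exists_subseq_weakTendsto_of_separable [CompleteSpace H]
    [TopologicalSpace.SeparableSpace H] {x : ℕ → H} {R : ℝ} (hx : ∀ n, ‖x n‖ ≤ R) :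
    ∃ (y : H) (σ : ℕ → ℕ), StrictMono σ ∧ WeakTendsto (x ∘ σ) y := by
  let f : ℕ → WeakDual ℝ H := fun n =>
    StrongDual.toWeakDual (InnerProductSpace.toDual ℝ H (x n))
  have hf : ∀ n, f n ∈ WeakDual.toStrongDual ⁻¹' Metric.closedBall (0 : StrongDual ℝ H) R := by
    intro n
    have hn : ‖InnerProductSpace.toDual ℝ H (x n)‖ ≤ R := by
      rw [LinearIsometryEquiv.norm_map]
      exact hx n
    rw [mem_preimage, mem_closedBall_zero_iff]
    exact hn
  obtain ⟨g, -, σ, hσ, hlim⟩ := WeakDual.isSeqCompact_closedBall ℝ H 0 R hf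
  refine ⟨(InnerProductSpace.toDual ℝ H).symm (WeakDual.toStrongDual g), σ, hσ, fun w => ?_⟩
  rw [InnerProductSpace.toDual_symm_apply]
  exact ((WeakDual.eval_continuous (𝕜 := ℝ) (E := H) w).tendsto g).comp hlim

/-- A sequence lives in the closed span of its values, which is separable. -/
theorem exists_subseq_weakTendsto [CompleteSpace H] {x : ℕ → H} {R : ℝ}
    (hx : ∀ n, ‖x n‖ ≤ R) :
    ∃ (y : H) (σ : ℕ → ℕ), StrictMono σ ∧ WeakTendsto (x ∘ σ) y := by
  let K := (Submodule.span ℝ (range x)).topologicalClosure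
  have hK : IsClosed (K : Set H) := Submodule.isClosed_topologicalClosure _
  have : CompleteSpace K := hK.completeSpace_coe
  have : TopologicalSpace.SeparableSpace K :=
    ((countable_range x).isSeparable.span (R := ℝ)).closure.separableSpace
  let x' : ℕ → K := fun n =>
    ⟨x n, Submodule.le_topologicalClosure _ (Submodule.subset_span (mem_range_self n))⟩
  obtain ⟨y, σ, hσ, hy⟩ := exists_subseq_weakTendsto_of_separable (x := x') hx
  refine ⟨y, σ, hσ, fun w => ?_⟩
  have hproj := hy (K.orthogonalProjectionOnto w)
  simp only [Function.comp_apply, K.inner_orthogonalProjectionOnto_eq_of_mem_left] at hproj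
  exact hproj

namespace WeakTendsto

variable {x x' : ℕ → H} {y y' : H}

theorem unique (h : WeakTendsto x y) (h' : WeakTendsto x y') : y = y' :=
  ext_inner_right ℝ fun w => tendsto_nhds_unique (h w) (h' w)

theorem of_tendsto (h : Tendsto x atTop (𝓝 y)) : WeakTendsto x y :=
  fun _ => h.inner tendsto_const_nhds

theorem sub (h : WeakTendsto x y) (h' : WeakTendsto x' y') :
    WeakTendsto (fun n => x n - x' n) (y - y') := fun w => by
  simpa only [inner_sub_left] using (h w).sub (h' w)

theorem map {G : Type*} [NormedAddCommGroup G] [InnerProductSpace ℝ G] [CompleteSpace H]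
    [CompleteSpace G] (h : WeakTendsto x y) (L : H →L[ℝ] G) :
    WeakTendsto (fun n => L (x n)) (L y) := fun w => by
  simpa only [ContinuousLinearMap.adjoint_inner_right] using h (L.adjoint w)

theorem mem_of_isClosed [CompleteSpace H] (h : WeakTendsto x y) {V : Submodule ℝ H}
    (hV : IsClosed (V : Set H)) (hx : ∀ n, x n ∈ V) : y ∈ V := by
  have : CompleteSpace V := hV.completeSpace_coe
  rw [← V.orthogonal_orthogonal, Submodule.mem_orthogonal']
  intro w hw
  refine tendsto_nhds_unique (h w) (tendsto_const_nhds.congr fun n => ?_)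
  exact ((Submodule.mem_orthogonal V w).1 hw _ (hx n)).symm

/-- This is lower semicontinuity of the norm in the form of a convergent lower bound: expand
`0 ≤ ‖x n - y‖ ^ 2`. -/
theorem exists_le_norm_sq (h : WeakTendsto x y) :
    ∃ l : ℕ → ℝ, (∀ n, l n ≤ ‖x n‖ ^ 2) ∧ Tendsto l atTop (𝓝 (‖y‖ ^ 2)) := by
  refine ⟨fun n => 2 * ⟪x n, y⟫ - ‖y‖ ^ 2, fun n => ?_, ?_⟩
  · have := norm_sub_sq_real (x n) y
    linarith [sq_nonneg ‖x n - y‖]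
  · convert ((h y).const_mul 2).sub_const (‖y‖ ^ 2) using 2
    rw [real_inner_self_eq_norm_sq]
    ring

theorem norm_le_of_tendsto (h : WeakTendsto x y) {c : ℕ → ℝ} {b : ℝ} (hc : ∀ n, ‖x n‖ ≤ c n)
    (hb : Tendsto c atTop (𝓝 b)) : ‖y‖ ≤ b := by
  obtain ⟨l, hl, hlim⟩ := h.exists_le_norm_sq
  have hb0 : 0 ≤ b := ge_of_tendsto' hb fun n => (norm_nonneg _).trans (hc n)
  refine le_of_sq_le_sq ?_ hb0
  refine le_of_tendsto_of_tendsto' hlim (hb.pow 2) fun n => (hl n).trans ?_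
  exact pow_le_pow_left₀ (norm_nonneg _) (hc n) 2

end WeakTendsto

end WeakConvergence

theorem exists_pos_mul_ofReal_rpow_le {K ε : ℝ≥0∞} (hK : K ≠ ∞) (hε : 0 < ε) {θ : ℝ}
    (hθ : 0 < θ) : ∃ r : ℝ, 0 < r ∧ K * ENNReal.ofReal r ^ θ ≤ ε := by
  have hcont : Continuous fun r : ℝ => K * ENNReal.ofReal r ^ θ :=
    (ENNReal.continuous_const_mul hK).comp
      (ENNReal.continuous_rpow_const.comp ENNReal.continuous_ofReal)
  have hlim : Tendsto (fun r : ℝ => K * ENNReal.ofReal r ^ θ) (𝓝[>] 0) (𝓝 0) := by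
    simpa only [ENNReal.ofReal_zero, ENNReal.zero_rpow_of_pos hθ, mul_zero] using
      (hcont.tendsto 0).mono_left nhdsWithin_le_nhds
  exact (eventually_mem_nhdsWithin.and (ENNReal.tendsto_nhds_zero.1 hlim ε hε)).exists

section TranslationEstimate

open Metric ProbabilityTheory

theorem enorm_sub_le_lintegral_enorm_fderiv {E F : Type*} [NormedAddCommGroup E]
    [NormedSpace ℝ E] [NormedAddCommGroup F] [NormedSpace ℝ F] [CompleteSpace F] {φ : E → F}
    (hφ : ContDiff ℝ 1 φ) (p v : E) :
    ‖φ (p + v) - φ p‖ₑ ≤ ‖v‖ₑ * ∫⁻ t in Ioc (0 : ℝ) 1, ‖fderiv ℝ φ (p + t • v)‖ₑ := by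
  have hderiv (t : ℝ) : HasDerivAt (fun t : ℝ => φ (p + t • v)) (fderiv ℝ φ (p + t • v) v) t := by
    have hline : HasDerivAt (fun t : ℝ => p + t • v) v t := by
      simpa using ((hasDerivAt_id t).smul_const v).const_add p
    exact ((hφ.differentiable one_ne_zero _).hasFDerivAt).comp_hasDerivAt t hline
  have hcont : Continuous fun t : ℝ => fderiv ℝ φ (p + t • v) :=
    (hφ.continuous_fderiv one_ne_zero).comp (by fun_prop)
  have hFTC : ∫ t in Ioc (0 : ℝ) 1, fderiv ℝ φ (p + t • v) v = φ (p + v) - φ p := by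
    rw [← intervalIntegral.integral_of_le zero_le_one,
      intervalIntegral.integral_eq_sub_of_hasDerivAt (fun t _ => hderiv t)
        ((hcont.clm_apply continuous_const).intervalIntegrable 0 1)]
    simp only [one_smul, zero_smul, add_zero]
  rw [← hFTC, ← lintegral_const_mul _ hcont.enorm.measurable]
  refine (enorm_integral_le_lintegral_enorm _).trans (lintegral_mono fun t => ?_)
  rw [mul_comm]
  exact ContinuousLinearMap.le_opENorm _ _

variable {E F : Type*} [NormedAddCommGroup E] [MeasurableSpace E] [BorelSpace E]
  {μ : Measure E} [μ.IsAddHaarMeasure] [NormedAddCommGroup F] [NormedSpace ℝ F]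

theorem setAverage_closedBall_eq_integral_cond (φ : E → F) (p : E) (r : ℝ) :
    ⨍ v in closedBall p r, φ v ∂μ = ∫ v, φ (p + v) ∂μ[|closedBall (0 : E) r] := by
  have hpre : (fun v => p + v) ⁻¹' closedBall p r = closedBall 0 r := by
    rw [preimage_add_closedBall, sub_self]
  rw [setAverage_eq', ProbabilityTheory.cond, integral_smul_measure, integral_smul_measure,
    Measure.addHaar_closedBall_center, ← hpre]
  congr 1
  exact ((measurePreserving_add_left μ p).setIntegral_preimage_emb
    (measurableEmbedding_addLeft p) φ _).symm

theorem enorm_setAverage_closedBall_le (φ : E → F) (p : E) (r : ℝ) :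
    ‖⨍ v in closedBall p r, φ v ∂μ‖ₑ ≤ (μ (closedBall 0 r))⁻¹ * ∫⁻ v, ‖φ v‖ₑ ∂μ := by
  rw [setAverage_eq', Measure.addHaar_closedBall_center]
  refine (enorm_integral_le_lintegral_enorm _).trans ?_
  rw [lintegral_smul_measure, smul_eq_mul]
  exact mul_le_mul_right (setLIntegral_le_lintegral _ _) _

variable [NormedSpace ℝ E] [FiniteDimensional ℝ E]

theorem lintegral_enorm_translate_sub_le [CompleteSpace F] {φ : E → F} (hφ : ContDiff ℝ 1 φ)
    (v : E) :
    ∫⁻ p, ‖φ (p + v) - φ p‖ₑ ∂μ ≤ ‖v‖ₑ * ∫⁻ p, ‖fderiv ℝ φ p‖ₑ ∂μ := by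
  have hcont : Continuous fun z : E × ℝ => ‖fderiv ℝ φ (z.1 + z.2 • v)‖ₑ :=
    ((hφ.continuous_fderiv one_ne_zero).comp (by fun_prop)).enorm
  calc ∫⁻ p, ‖φ (p + v) - φ p‖ₑ ∂μ
      ≤ ∫⁻ p, ‖v‖ₑ * (∫⁻ t : ℝ in Ioc 0 1, ‖fderiv ℝ φ (p + t • v)‖ₑ) ∂μ :=
        lintegral_mono fun p => enorm_sub_le_lintegral_enorm_fderiv hφ p v
    _ = ‖v‖ₑ * ∫⁻ t in Ioc (0 : ℝ) 1, ∫⁻ p, ‖fderiv ℝ φ (p + t • v)‖ₑ ∂μ := by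
        rw [lintegral_const_mul _ hcont.measurable.lintegral_prod_right',
          lintegral_lintegral_swap hcont.measurable.aemeasurable]
    _ = ‖v‖ₑ * ∫⁻ p, ‖fderiv ℝ φ p‖ₑ ∂μ := by
        simp only [lintegral_add_right_eq_self fun p => ‖fderiv ℝ φ p‖ₑ, lintegral_const,
          Measure.restrict_apply_univ, Real.volume_Ioc, sub_zero, ENNReal.ofReal_one, mul_one]

theorem stronglyMeasurable_setAverage_closedBall {φ : E → F} (hφ : Continuous φ) (r : ℝ) :
    StronglyMeasurable fun p => ⨍ v in closedBall p r, φ v ∂μ := by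
  have hsum : StronglyMeasurable fun z : E × E => φ (z.1 + z.2) :=
    (hφ.comp continuous_add).stronglyMeasurable
  simpa only [← setAverage_closedBall_eq_integral_cond] using
    hsum.integral_prod_right' (ν := μ[|closedBall (0 : E) r])

theorem lintegral_enorm_setAverage_closedBall_sub_le [CompleteSpace F] {φ : E → F}
    (hφ : ContDiff ℝ 1 φ) {r : ℝ} (hr : 0 < r) :
    ∫⁻ p, ‖(⨍ v in closedBall p r, φ v ∂μ) - φ p‖ₑ ∂μ
      ≤ ENNReal.ofReal r * ∫⁻ p, ‖fderiv ℝ φ p‖ₑ ∂μ := by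
  set ν : Measure E := μ[|closedBall (0 : E) r]
  have : IsProbabilityMeasure ν :=
    cond_isProbabilityMeasure_of_finite (measure_closedBall_pos μ 0 hr).ne'
      measure_closedBall_lt_top.ne
  have hint (p : E) : Integrable (fun v => φ (p + v)) ν :=
    ((hφ.continuous.comp (by fun_prop)).continuousOn.integrableOn_compact
      (isCompact_closedBall 0 r)).smul_measure
      (ENNReal.inv_ne_top.2 (measure_closedBall_pos μ 0 hr).ne')
  have hnorm : ∀ᵐ v ∂ν, ‖v‖ₑ ≤ ENNReal.ofReal r :=
    (ae_cond_mem measurableSet_closedBall).mono fun v hv => by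
      rw [← ofReal_norm]
      exact ENNReal.ofReal_le_ofReal (mem_closedBall_zero_iff.1 hv)
  have hmeas : Measurable fun z : E × E => ‖φ (z.1 + z.2) - φ z.1‖ₑ :=
    (((hφ.continuous.comp continuous_add).sub (hφ.continuous.comp continuous_fst)).enorm).measurable
  calc ∫⁻ p, ‖(⨍ v in closedBall p r, φ v ∂μ) - φ p‖ₑ ∂μ
      = ∫⁻ p, ‖∫ v, (φ (p + v) - φ p) ∂ν‖ₑ ∂μ := by
        refine lintegral_congr fun p => ?_
        rw [setAverage_closedBall_eq_integral_cond, integral_sub (hint p) (integrable_const _),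
          integral_const, probReal_univ, one_smul]
    _ ≤ ∫⁻ p, ∫⁻ v, ‖φ (p + v) - φ p‖ₑ ∂ν ∂μ :=
        lintegral_mono fun p => enorm_integral_le_lintegral_enorm _
    _ = ∫⁻ v, ∫⁻ p, ‖φ (p + v) - φ p‖ₑ ∂μ ∂ν := lintegral_lintegral_swap hmeas.aemeasurable
    _ ≤ ∫⁻ _, ENNReal.ofReal r * ∫⁻ p, ‖fderiv ℝ φ p‖ₑ ∂μ ∂ν :=
        lintegral_mono_ae <| hnorm.mono fun v hv =>
          (lintegral_enorm_translate_sub_le hφ v).trans (mul_le_mul_left hv _)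
    _ = ENNReal.ofReal r * ∫⁻ p, ‖fderiv ℝ φ p‖ₑ ∂μ := by
        rw [lintegral_const, measure_univ, mul_one]

theorem tendsto_setLIntegral_enorm_setAverage_zero {φ : ℕ → E → F}
    (hφ : ∀ n, Continuous (φ n)) {K : ℝ≥0∞} (hK : K ≠ ∞) (hφK : ∀ n, ∫⁻ p, ‖φ n p‖ₑ ∂μ ≤ K)
    {r : ℝ} (hr : 0 < r)
    (hball : ∀ p, Tendsto (fun n => ∫ v in closedBall p r, φ n v ∂μ) atTop (𝓝 0))
    {s : Set E} (hs : μ s ≠ ∞) :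
    Tendsto (fun n => ∫⁻ p in s, ‖⨍ v in closedBall p r, φ n v ∂μ‖ₑ ∂μ) atTop (𝓝 0) := by
  have hbound : ∀ n p, ‖⨍ v in closedBall p r, φ n v ∂μ‖ₑ ≤ (μ (closedBall 0 r))⁻¹ * K :=
    fun n p => (enorm_setAverage_closedBall_le _ p r).trans (mul_le_mul_right (hφK n) _)
  have hfinite : ∫⁻ _ in s, (μ (closedBall 0 r))⁻¹ * K ∂μ ≠ ∞ := by
    rw [setLIntegral_const]
    refine ENNReal.mul_ne_top (ENNReal.mul_ne_top ?_ hK) hs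
    exact ENNReal.inv_ne_top.2 (measure_closedBall_pos μ 0 hr).ne'
  have hpointwise (p : E) :
      Tendsto (fun n => ‖⨍ v in closedBall p r, φ n v ∂μ‖ₑ) atTop (𝓝 0) := by
    simp only [setAverage_eq]
    simpa using ((hball p).const_smul (μ.real (closedBall p r))⁻¹).enorm
  simpa only [lintegral_zero] using tendsto_lintegral_of_dominated_convergence _
    (fun n => (stronglyMeasurable_setAverage_closedBall (hφ n) r).enorm)
    (fun n => Eventually.of_forall (hbound n)) hfinite (Eventually.of_forall hpointwise)

/-- Replace `φ n` by its averages over balls of radius `r`: this costs at most `r * K` in `L¹`,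
uniformly in `n`, and the averages tend to zero by dominated convergence. -/
theorem tendsto_setLIntegral_enorm_zero_of_setIntegral_closedBall [CompleteSpace F]
    {φ : ℕ → E → F} (hφ : ∀ n, ContDiff ℝ 1 (φ n)) {K : ℝ≥0∞} (hK : K ≠ ∞)
    (hφK : ∀ n, ∫⁻ p, ‖φ n p‖ₑ ∂μ ≤ K) (hdK : ∀ n, ∫⁻ p, ‖fderiv ℝ (φ n) p‖ₑ ∂μ ≤ K)
    (hball : ∀ p r, Tendsto (fun n => ∫ v in closedBall p r, φ n v ∂μ) atTop (𝓝 0))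
    {s : Set E} (hs : μ s ≠ ∞) :
    Tendsto (fun n => ∫⁻ p in s, ‖φ n p‖ₑ ∂μ) atTop (𝓝 0) := by
  refine ENNReal.tendsto_nhds_zero.2 fun ε hε => ?_
  obtain ⟨r, hr, hrε⟩ := exists_pos_mul_ofReal_rpow_le hK (ENNReal.half_pos hε.ne') one_pos
  rw [ENNReal.rpow_one, mul_comm] at hrε
  filter_upwards [ENNReal.tendsto_nhds_zero.1 (tendsto_setLIntegral_enorm_setAverage_zero
    (fun n => (hφ n).continuous) hK hφK hr (fun p => hball p r) hs) _ (ENNReal.half_pos hε.ne')]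
    with n hn
  calc ∫⁻ p in s, ‖φ n p‖ₑ ∂μ
      ≤ ∫⁻ p in s, (‖(⨍ v in closedBall p r, φ n v ∂μ) - φ n p‖ₑ
          + ‖⨍ v in closedBall p r, φ n v ∂μ‖ₑ) ∂μ := by
        refine lintegral_mono fun p => ?_
        rw [enorm_sub_rev]
        simpa only [sub_add_cancel] using
          enorm_add_le (φ n p - ⨍ v in closedBall p r, φ n v ∂μ) (⨍ v in closedBall p r, φ n v ∂μ)
    _ = ∫⁻ p in s, ‖(⨍ v in closedBall p r, φ n v ∂μ) - φ n p‖ₑ ∂μ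
          + ∫⁻ p in s, ‖⨍ v in closedBall p r, φ n v ∂μ‖ₑ ∂μ :=
        lintegral_add_right' _
          (stronglyMeasurable_setAverage_closedBall (hφ n).continuous r).enorm.aemeasurable
    _ ≤ ENNReal.ofReal r * K + ε / 2 := by
        gcongr
        exact (setLIntegral_le_lintegral _ _).trans
          ((lintegral_enorm_setAverage_closedBall_sub_le (hφ n) hr).trans
            (mul_le_mul_right (hdK n) _))
    _ ≤ ε := (add_le_add_left hrε _).trans_eq (ENNReal.add_halves ε)

end TranslationEstimate

section ConvergenceInMeasure

variable {α E : Type*} {m : MeasurableSpace α} {μ : Measure α} [NormedAddCommGroup E]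
  {p r : ℝ≥0∞}

theorem unifIntegrable_of_eLpNorm_le {ι : Type*} {f : ι → α → E}
    (hf : ∀ i, AEStronglyMeasurable (f i) μ) (hp : p ≠ 0) (hpr : p < r) {C : ℝ≥0∞} (hC : C ≠ ∞)
    (hfC : ∀ i, eLpNorm (f i) r μ ≤ C) : UnifIntegrable f p μ := by
  intro ε hε
  have hθ : 0 < 1 / p.toReal - 1 / r.toReal := by
    have hp' := ENNReal.toReal_pos hp hpr.ne_top
    rcases eq_or_ne r ∞ with rfl | hr
    · simpa using hp'
    · exact sub_pos.2
        (one_div_lt_one_div_of_lt hp' ((ENNReal.toReal_lt_toReal hpr.ne_top hr).2 hpr))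
  obtain ⟨δ, hδ, hδε⟩ := exists_pos_mul_ofReal_rpow_le hC (ENNReal.ofReal_pos.2 hε) hθ
  refine ⟨δ, hδ, fun i s hs hμs => ?_⟩
  calc eLpNorm (s.indicator (f i)) p μ = eLpNorm (f i) p (μ.restrict s) :=
        eLpNorm_indicator_eq_eLpNorm_restrict hs
    _ ≤ eLpNorm (f i) r (μ.restrict s) * μ s ^ (1 / p.toReal - 1 / r.toReal) := by
        simpa only [Measure.restrict_apply_univ] using
          eLpNorm_le_eLpNorm_mul_rpow_measure_univ hpr.le (hf i).restrict
    _ ≤ C * ENNReal.ofReal δ ^ (1 / p.toReal - 1 / r.toReal) := by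
        gcongr
        exact (eLpNorm_restrict_le _ _ _ _).trans (hfC i)
    _ ≤ ENNReal.ofReal ε := hδε

theorem tendsto_eLpNorm_sub_of_tendstoInMeasure_of_eLpNorm_le [IsFiniteMeasure μ]
    {f : ℕ → α → E} {g : α → E} (hf : ∀ n, AEStronglyMeasurable (f n) μ) (hg : MemLp g p μ)
    (hp : 1 ≤ p) (hpr : p < r) {C : ℝ≥0∞} (hC : C ≠ ∞) (hfC : ∀ n, eLpNorm (f n) r μ ≤ C)
    (hfg : TendstoInMeasure μ f atTop g) :
    Tendsto (fun n => eLpNorm (f n - g) p μ) atTop (𝓝 0) :=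
  tendsto_Lp_finite_of_tendstoInMeasure hp hpr.ne_top hf hg
    (unifIntegrable_of_eLpNorm_le hf (one_pos.trans_le hp).ne' hpr hC hfC) hfg

theorem eLpNorm_le_of_tendstoInMeasure {f : ℕ → α → E} {g : α → E}
    (hf : ∀ n, AEStronglyMeasurable (f n) μ) (hfg : TendstoInMeasure μ f atTop g)
    {c : ℕ → ℝ≥0∞} (hfc : ∀ n, eLpNorm (f n) r μ ≤ c n) {b : ℝ≥0∞} (hc : Tendsto c atTop (𝓝 b)) :
    eLpNorm g r μ ≤ b := by
  obtain ⟨σ, hσ, hae⟩ := hfg.exists_seq_tendsto_ae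
  calc eLpNorm g r μ ≤ liminf (fun n => eLpNorm (f (σ n)) r μ) atTop :=
        Lp.eLpNorm_lim_le_liminf_eLpNorm (fun n => hf (σ n)) g hae
    _ ≤ liminf (fun n => c (σ n)) atTop := liminf_le_liminf (Eventually.of_forall fun n => hfc _)
    _ = b := (hc.comp hσ.tendsto_atTop).liminf_eq

end ConvergenceInMeasure

namespace IsTestOn

variable {s : Set (ℝ × ℝ)} {φ ψ : ℝ × ℝ → ℝ}

theorem zero : IsTestOn s 0 :=
  ⟨contDiff_const, HasCompactSupport.zero, by
    rw [tsupport, Function.support_zero, closure_empty]; exact empty_subset s⟩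

theorem add (hφ : IsTestOn s φ) (hψ : IsTestOn s ψ) : IsTestOn s (φ + ψ) :=
  ⟨hφ.1.add hψ.1, hφ.2.1.add hψ.2.1, (tsupport_add φ ψ).trans (union_subset hφ.2.2 hψ.2.2)⟩

theorem comp (hφ : IsTestOn s φ) {f : ℝ → ℝ} (hf : ContDiff ℝ (⊤ : ℕ∞) f) (hf0 : f 0 = 0) :
    IsTestOn s (f ∘ φ) :=
  ⟨hf.comp hφ.1, hφ.2.1.comp_left hf0, (tsupport_comp_subset hf0 φ).trans hφ.2.2⟩

theorem const_smul (c : ℝ) (hφ : IsTestOn s φ) : IsTestOn s (c • φ) :=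
  hφ.comp (f := fun t => c * t) (contDiff_const.mul contDiff_id) (mul_zero c)

theorem continuous (hφ : IsTestOn s φ) : Continuous φ := hφ.1.continuous

theorem differentiable (hφ : IsTestOn s φ) : Differentiable ℝ φ :=
  hφ.1.differentiable (by simp)

theorem fderiv_apply (hφ : IsTestOn s φ) (v : ℝ × ℝ) : IsTestOn s fun p => fderiv ℝ φ p v :=
  ⟨(hφ.1.fderiv_right (by simp)).clm_apply contDiff_const, hφ.2.1.fderiv_apply ℝ v,
    (tsupport_fderiv_apply_subset ℝ v).trans hφ.2.2⟩

theorem eq_zero_of_notMem (hφ : IsTestOn s φ) {p : ℝ × ℝ} (hp : p ∉ s) : φ p = 0 :=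
  image_eq_zero_of_notMem_tsupport fun h => hp (hφ.2.2 h)

theorem setIntegral_eq_integral (hφ : IsTestOn s φ) : ∫ p in s, φ p = ∫ p, φ p :=
  setIntegral_eq_integral_of_forall_compl_eq_zero fun _ => hφ.eq_zero_of_notMem

theorem memLp_mul (hφ : IsTestOn s φ) (hs : IsOpen s) {w : ℝ × ℝ → ℝ} (hw : ContinuousOn w s)
    (r : ℝ≥0∞) : MemLp (fun p => w p * φ p) r (volume.restrict s) := by
  have hsupp : tsupport (fun p => w p * φ p) ⊆ s := (tsupport_mul_subset_right).trans hφ.2.2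
  have hcont : Continuous fun p => w p * φ p :=
    (hw.mul hφ.continuous.continuousOn).continuous_of_tsupport_subset hs hsupp
  exact (hcont.memLp_of_hasCompactSupport hφ.2.1.mul_left).restrict s

theorem memLp (hφ : IsTestOn s φ) (r : ℝ≥0∞) : MemLp φ r (volume.restrict s) :=
  (hφ.continuous.memLp_of_hasCompactSupport hφ.2.1).restrict s

theorem mul (hφ : IsTestOn s φ) (hψ : IsTestOn s ψ) : IsTestOn s fun p => φ p * ψ p :=
  ⟨hφ.1.mul hψ.1, hφ.2.1.mul_right, (tsupport_mul_subset_left).trans hφ.2.2⟩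

theorem integral_mul_fderiv_eq_neg (hφ : IsTestOn s φ) (hψ : IsTestOn s ψ) (v : ℝ × ℝ) :
    ∫ p in s, φ p * fderiv ℝ ψ p v = -∫ p in s, fderiv ℝ φ p v * ψ p := by
  have hint {f g : ℝ × ℝ → ℝ} (hf : IsTestOn s f) (hg : IsTestOn s g) :
      Integrable fun p => f p * g p :=
    (hf.mul hg).continuous.integrable_of_hasCompactSupport (hf.mul hg).2.1
  rw [(hφ.mul (hψ.fderiv_apply v)).setIntegral_eq_integral,
    ((hφ.fderiv_apply v).mul hψ).setIntegral_eq_integral]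
  exact integral_mul_fderiv_eq_neg_fderiv_mul_of_integrable (hint (hφ.fderiv_apply v) hψ)
    (hint hφ (hψ.fderiv_apply v)) (hint hφ hψ) (fun p _ => hφ.differentiable p)
    (fun p _ => hψ.differentiable p)

end IsTestOn

theorem exists_isTestOn_ne_zero {s : Set (ℝ × ℝ)} {p : ℝ × ℝ} (hp : s ∈ 𝓝 p) :
    ∃ φ, IsTestOn s φ ∧ φ p ≠ 0 := by
  obtain ⟨φ, hsupp, hc, hφ, -, hφp⟩ := exists_contDiff_tsupport_subset (n := (⊤ : ℕ∞)) hp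
  exact ⟨φ, ⟨hφ, hc, hsupp⟩, hφp ▸ one_ne_zero⟩

section L2

variable {α : Type*} {m : MeasurableSpace α} {μ : Measure α}

theorem norm_sq_toLp_two_eq_integral {f : α → ℝ} (hf : MemLp f 2 μ) :
    ‖hf.toLp f‖ ^ 2 = ∫ p, f p ^ 2 ∂μ := by
  rw [← real_inner_self_eq_norm_sq, L2.inner_def]
  refine integral_congr_ae ?_
  filter_upwards [hf.coeFn_toLp] with p hp
  rw [hp, real_inner_self_eq_norm_sq, Real.norm_eq_abs, sq_abs]

theorem inner_toLp_two_eq_integral (g : Lp ℝ 2 μ) {f : α → ℝ} (hf : MemLp f 2 μ) :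
    ⟪g, hf.toLp f⟫ = ∫ p, g p * f p ∂μ := by
  rw [L2.inner_def]
  refine integral_congr_ae ?_
  filter_upwards [hf.coeFn_toLp] with p hp
  rw [hp, RCLike.inner_apply, conj_trivial, mul_comm]

end L2

/-- Triples of square integrable functions. A function `u` with weak gradient `(gx, gy)` is encoded
as the triple `(u, w₁ gx, w₂ gy)`, so that the norm of the triple is the weighted Sobolev norm and
the norm of its second component is the square root of the energy. -/
abbrev L2Jet {α : Type*} {_ : MeasurableSpace α} (μ : Measure α) : Type _ :=
  WithLp 2 (Lp ℝ 2 μ × WithLp 2 (Lp ℝ 2 μ × Lp ℝ 2 μ))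

namespace L2Jet

variable {α : Type*} {m : MeasurableSpace α} {μ : Measure α} {a b c a' b' c' : α → ℝ}

/-- The jet represented by three functions. -/
def mk (ha : MemLp a 2 μ) (hb : MemLp b 2 μ) (hc : MemLp c 2 μ) : L2Jet μ :=
  WithLp.toLp 2 (ha.toLp a, WithLp.toLp 2 (hb.toLp b, hc.toLp c))

theorem mk_add (ha : MemLp a 2 μ) (hb : MemLp b 2 μ) (hc : MemLp c 2 μ) (ha' : MemLp a' 2 μ)
    (hb' : MemLp b' 2 μ) (hc' : MemLp c' 2 μ) :
    mk (ha.add ha') (hb.add hb') (hc.add hc') = mk ha hb hc + mk ha' hb' hc' := rfl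

theorem mk_sub (ha : MemLp a 2 μ) (hb : MemLp b 2 μ) (hc : MemLp c 2 μ) (ha' : MemLp a' 2 μ)
    (hb' : MemLp b' 2 μ) (hc' : MemLp c' 2 μ) :
    mk (ha.sub ha') (hb.sub hb') (hc.sub hc') = mk ha hb hc - mk ha' hb' hc' := rfl

theorem mk_const_smul (r : ℝ) (ha : MemLp a 2 μ) (hb : MemLp b 2 μ) (hc : MemLp c 2 μ) :
    mk (ha.const_smul r) (hb.const_smul r) (hc.const_smul r) = r • mk ha hb hc := rfl

theorem mk_congr_ae {ha : MemLp a 2 μ} {hb : MemLp b 2 μ} {hc : MemLp c 2 μ} {ha' : MemLp a' 2 μ}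
    {hb' : MemLp b' 2 μ} {hc' : MemLp c' 2 μ} (h₁ : a =ᵐ[μ] a') (h₂ : b =ᵐ[μ] b')
    (h₃ : c =ᵐ[μ] c') : mk ha hb hc = mk ha' hb' hc' := by
  rw [mk, mk, (MemLp.toLp_eq_toLp_iff ha ha').2 h₁, (MemLp.toLp_eq_toLp_iff hb hb').2 h₂,
    (MemLp.toLp_eq_toLp_iff hc hc').2 h₃]

theorem mk_coeFn (x : L2Jet μ) :
    mk (Lp.memLp x.fst) (Lp.memLp x.snd.fst) (Lp.memLp x.snd.snd) = x := by
  simp only [mk, Lp.toLp_coeFn]; rfl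

theorem inner_mk (x : L2Jet μ) (ha : MemLp a 2 μ) (hb : MemLp b 2 μ) (hc : MemLp c 2 μ) :
    ⟪x, mk ha hb hc⟫ =
      ∫ p, x.fst p * a p ∂μ + (∫ p, x.snd.fst p * b p ∂μ + ∫ p, x.snd.snd p * c p ∂μ) := by
  rw [WithLp.prod_inner_apply, WithLp.prod_inner_apply, mk]
  exact congrArg₂ _ (inner_toLp_two_eq_integral _ ha)
    (congrArg₂ _ (inner_toLp_two_eq_integral _ hb) (inner_toLp_two_eq_integral _ hc))

theorem norm_sq_fst_mk (ha : MemLp a 2 μ) (hb : MemLp b 2 μ) (hc : MemLp c 2 μ) :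
    ‖(mk ha hb hc).fst‖ ^ 2 = ∫ p, a p ^ 2 ∂μ :=
  norm_sq_toLp_two_eq_integral ha

theorem norm_sq_snd_mk (ha : MemLp a 2 μ) (hb : MemLp b 2 μ) (hc : MemLp c 2 μ) :
    ‖(mk ha hb hc).snd‖ ^ 2 = ∫ p, b p ^ 2 ∂μ + ∫ p, c p ^ 2 ∂μ := by
  rw [WithLp.prod_norm_sq_eq_of_L2, ← norm_sq_toLp_two_eq_integral hb,
    ← norm_sq_toLp_two_eq_integral hc]
  rfl

end L2Jet

/-- Admissible weights for the degenerate energy on `s`. Square integrability of the inverse is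
what turns a bound on the weighted energy into an `L¹` bound on the gradient. -/
structure IsWeightOn (s : Set (ℝ × ℝ)) (w : ℝ × ℝ → ℝ) : Prop where
  continuousOn : ContinuousOn w s
  pos : ∀ p ∈ s, 0 < w p
  memLp_inv : MemLp (fun p => (w p)⁻¹) 2 (volume.restrict s)

section TestJets

variable {s : Set (ℝ × ℝ)} {w₁ w₂ : ℝ × ℝ → ℝ}

/-- The space of test functions on `s`. -/
def testFunctions (s : Set (ℝ × ℝ)) : Submodule ℝ (ℝ × ℝ → ℝ) where
  carrier := {φ | IsTestOn s φ}
  zero_mem' := IsTestOn.zero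
  add_mem' := IsTestOn.add
  smul_mem' c _ := IsTestOn.const_smul c

/-- The jet `(φ, w₁ ∂ₓφ, w₂ ∂_yφ)` of a test function `φ`. -/
def testJet (hs : IsOpen s) (hw₁ : IsWeightOn s w₁) (hw₂ : IsWeightOn s w₂) :
    testFunctions s →ₗ[ℝ] L2Jet (volume.restrict s) where
  toFun φ := L2Jet.mk (φ.2.memLp 2) ((φ.2.fderiv_apply (1, 0)).memLp_mul hs hw₁.continuousOn 2)
    ((φ.2.fderiv_apply (0, 1)).memLp_mul hs hw₂.continuousOn 2)
  map_add' φ ψ := by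
    rw [← L2Jet.mk_add]
    congr 1 <;> ext p <;>
      simp [fderiv_add (φ.2.differentiable p) (ψ.2.differentiable p), mul_add]
  map_smul' c φ := by
    rw [RingHom.id_apply, ← L2Jet.mk_const_smul]
    congr 1 <;> ext p <;>
      simp [fderiv_const_smul (φ.2.differentiable p), mul_left_comm]

/-- The weighted Sobolev space `𝓗₀¹(s)`, as the closure of the jets of test functions. -/
def sobolevJets (hs : IsOpen s) (hw₁ : IsWeightOn s w₁) (hw₂ : IsWeightOn s w₂) :
    Submodule ℝ (L2Jet (volume.restrict s)) :=
  (LinearMap.range (testJet hs hw₁ hw₂)).topologicalClosure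

end TestJets

theorem lintegral_enorm_mul_le_eLpNorm_two_mul {α : Type*} {m : MeasurableSpace α} {μ : Measure α}
    {f g : α → ℝ} (hf : AEStronglyMeasurable f μ) (hg : AEStronglyMeasurable g μ) :
    ∫⁻ p, ‖f p * g p‖ₑ ∂μ ≤ eLpNorm f 2 μ * eLpNorm g 2 μ := by
  rw [← eLpNorm_one_eq_lintegral_enorm]
  have h := eLpNorm_smul_le_mul_eLpNorm (p := 2) (q := 2) (r := 1) hg hf
  exact h

theorem IsWeightOn.lintegral_enorm_le {s : Set (ℝ × ℝ)} {w : ℝ × ℝ → ℝ} (hw : IsWeightOn s w)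
    (hs : IsOpen s) {f : ℝ × ℝ → ℝ}
    (hf : AEStronglyMeasurable (fun p => w p * f p) (volume.restrict s)) :
    ∫⁻ p in s, ‖f p‖ₑ ≤ eLpNorm (fun p => (w p)⁻¹) 2 (volume.restrict s)
      * eLpNorm (fun p => w p * f p) 2 (volume.restrict s) :=
  calc ∫⁻ p in s, ‖f p‖ₑ = ∫⁻ p in s, ‖(w p)⁻¹ * (w p * f p)‖ₑ :=
        setLIntegral_congr_fun hs.measurableSet fun p hp => by
          simp only [inv_mul_cancel_left₀ (hw.pos p hp).ne']
    _ ≤ _ := lintegral_enorm_mul_le_eLpNorm_two_mul hw.memLp_inv.1 hf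

theorem enorm_clm_prod_le (L : ℝ × ℝ →L[ℝ] ℝ) : ‖L‖ₑ ≤ ‖L (1, 0)‖ₑ + ‖L (0, 1)‖ₑ := by
  rw [← ofReal_norm, ← ofReal_norm, ← ofReal_norm,
    ← ENNReal.ofReal_add (norm_nonneg _) (norm_nonneg _)]
  refine ENNReal.ofReal_le_ofReal (L.opNorm_le_bound (by positivity) fun v => ?_)
  have hv : L v = v.1 * L (1, 0) + v.2 * L (0, 1) := by
    rw [← smul_eq_mul, ← smul_eq_mul, ← map_smul, ← map_smul, ← map_add]
    simp
  rw [hv, add_mul, mul_comm ‖L (1, 0)‖, mul_comm ‖L (0, 1)‖]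
  refine (norm_add_le _ _).trans ?_
  rw [norm_mul, norm_mul]
  gcongr
  exacts [norm_fst_le v, norm_snd_le v]

section Compactness

variable {s : Set (ℝ × ℝ)} {w₁ w₂ : ℝ × ℝ → ℝ} (hs : IsOpen s) (hw₁ : IsWeightOn s w₁)
  (hw₂ : IsWeightOn s w₂)

theorem exists_lintegral_enorm_fderiv_le_testJet :
    ∃ C : ℝ≥0∞, C ≠ ∞ ∧ ∀ φ : testFunctions s,
      ∫⁻ p, ‖fderiv ℝ (φ : ℝ × ℝ → ℝ) p‖ₑ ≤ C * ‖testJet hs hw₁ hw₂ φ‖ₑ := by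
  refine ⟨eLpNorm (fun p => (w₁ p)⁻¹) 2 (volume.restrict s)
    + eLpNorm (fun p => (w₂ p)⁻¹) 2 (volume.restrict s),
    ENNReal.add_ne_top.2 ⟨hw₁.memLp_inv.2.ne, hw₂.memLp_inv.2.ne⟩, fun φ => ?_⟩
  have hsupp : Function.support (fun p => ‖fderiv ℝ (φ : ℝ × ℝ → ℝ) p‖ₑ) ⊆ s := fun p hp =>
    φ.2.2.2 (support_fderiv_subset ℝ (enorm_ne_zero (a := fderiv ℝ φ.1 p).1 hp))
  have hx := (φ.2.fderiv_apply (1, 0)).memLp_mul hs hw₁.continuousOn 2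
  have hy := (φ.2.fderiv_apply (0, 1)).memLp_mul hs hw₂.continuousOn 2
  have hgrad := WithLp.enorm_snd_le _ (testJet hs hw₁ hw₂ φ)
  have hnx : eLpNorm _ 2 (volume.restrict s) ≤ ‖testJet hs hw₁ hw₂ φ‖ₑ :=
    (Lp.enorm_toLp hx).symm.trans_le ((WithLp.enorm_fst_le _ _).trans hgrad)
  have hny : eLpNorm _ 2 (volume.restrict s) ≤ ‖testJet hs hw₁ hw₂ φ‖ₑ :=
    (Lp.enorm_toLp hy).symm.trans_le ((WithLp.enorm_snd_le _ _).trans hgrad)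
  calc ∫⁻ p, ‖fderiv ℝ (φ : ℝ × ℝ → ℝ) p‖ₑ
      = ∫⁻ p in s, ‖fderiv ℝ (φ : ℝ × ℝ → ℝ) p‖ₑ := (setLIntegral_eq_of_support_subset hsupp).symm
    _ ≤ ∫⁻ p in s, (‖fderiv ℝ (φ : ℝ × ℝ → ℝ) p (1, 0)‖ₑ
          + ‖fderiv ℝ (φ : ℝ × ℝ → ℝ) p (0, 1)‖ₑ) := lintegral_mono fun p => enorm_clm_prod_le _
    _ = (∫⁻ p in s, ‖fderiv ℝ (φ : ℝ × ℝ → ℝ) p (1, 0)‖ₑ)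
          + ∫⁻ p in s, ‖fderiv ℝ (φ : ℝ × ℝ → ℝ) p (0, 1)‖ₑ :=
        lintegral_add_left (φ.2.fderiv_apply (1, 0)).continuous.enorm.measurable _
    _ ≤ _ := by
        rw [add_mul]
        exact add_le_add ((hw₁.lintegral_enorm_le hs hx.1).trans (mul_le_mul_right hnx _))
          ((hw₂.lintegral_enorm_le hs hy.1).trans (mul_le_mul_right hny _))

theorem exists_seq_tendsto_sub_testJet {x : ℕ → L2Jet (volume.restrict s)}
    (hx : ∀ n, x n ∈ sobolevJets hs hw₁ hw₂) :
    ∃ φ : ℕ → testFunctions s, Tendsto (fun n => x n - testJet hs hw₁ hw₂ (φ n)) atTop (𝓝 0) := by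
  have happrox (n : ℕ) :
      ∃ φ, ‖x n - testJet hs hw₁ hw₂ φ‖ < 1 / ((n : ℝ) + 1) := by
    obtain ⟨-, ⟨φ, rfl⟩, hφ⟩ := Metric.mem_closure_iff.1 (hx n) _ (Nat.one_div_pos_of_nat (n := n))
    exact ⟨φ, by rwa [← dist_eq_norm]⟩
  choose φ hφ using happrox
  exact ⟨φ, squeeze_zero_norm (fun n => (hφ n).le) tendsto_one_div_add_atTop_nhds_zero_nat⟩

theorem setIntegral_testFunction_eq_inner (φ : testFunctions s) {t : Set (ℝ × ℝ)}
    (ht : MeasurableSet t) (ht' : volume.restrict s t ≠ ∞) :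
    ∫ p in t, (φ : ℝ × ℝ → ℝ) p = ⟪testJet hs hw₁ hw₂ φ, L2Jet.mk
      (memLp_indicator_const 2 ht (1 : ℝ) (.inr ht')) MemLp.zero MemLp.zero⟫ := by
  have hcoe : (testJet hs hw₁ hw₂ φ).fst =ᵐ[volume.restrict s] (φ : ℝ × ℝ → ℝ) :=
    (φ.2.memLp 2).coeFn_toLp
  calc ∫ p in t, (φ : ℝ × ℝ → ℝ) p
      = ∫ p in s, t.indicator (φ : ℝ × ℝ → ℝ) p := by
        rw [← integral_indicator ht, setIntegral_eq_integral_of_forall_compl_eq_zero]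
        exact fun p hp => by rw [indicator_apply_eq_zero]; exact fun _ => φ.2.eq_zero_of_notMem hp
    _ = ∫ p in s, (testJet hs hw₁ hw₂ φ).fst p * t.indicator (fun _ => 1) p := by
        refine integral_congr_ae (hcoe.mono fun p hp => ?_)
        simp only [hp, ← indicator_mul_right, mul_one]
    _ = _ := by rw [L2Jet.inner_mk]; simp

theorem L2Jet.eLpNorm_one_fst_le {α : Type*} {m : MeasurableSpace α} {μ : Measure α}
    (x : L2Jet μ) : eLpNorm x.fst 1 μ ≤ μ univ ^ (1 / 2 : ℝ) * ‖x‖ₑ :=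
  calc eLpNorm x.fst 1 μ ≤ eLpNorm x.fst 2 μ * μ univ ^ (1 / 2 : ℝ) := by
        convert eLpNorm_le_eLpNorm_mul_rpow_measure_univ (p := 1) (q := 2) one_le_two
          (Lp.aestronglyMeasurable x.fst) using 3
        norm_num
    _ = μ univ ^ (1 / 2 : ℝ) * ‖x.fst‖ₑ := by rw [mul_comm, Lp.enorm_def]
    _ ≤ _ := mul_le_mul_right (WithLp.enorm_fst_le _ x) _

theorem L2Jet.tendsto_eLpNorm_one_fst_zero {α : Type*} {m : MeasurableSpace α} {μ : Measure α}
    [IsFiniteMeasure μ] {x : ℕ → L2Jet μ} (hx : Tendsto x atTop (𝓝 0)) :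
    Tendsto (fun n => eLpNorm (x n).fst 1 μ) atTop (𝓝 0) := by
  have hbound : Tendsto (fun n => μ univ ^ (1 / 2 : ℝ) * ‖x n‖ₑ) atTop (𝓝 0) := by
    have hμ : μ univ ^ (1 / 2 : ℝ) ≠ ∞ :=
      ENNReal.rpow_ne_top_of_nonneg (by norm_num) (measure_ne_top μ univ)
    have h := ENNReal.Tendsto.const_mul hx.enorm (.inr hμ)
    rwa [enorm_zero, mul_zero] at h
  exact tendsto_of_tendsto_of_tendsto_of_le_of_le tendsto_const_nhds hbound (fun _ => zero_le)
    fun n => (x n).eLpNorm_one_fst_le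

theorem tendsto_eLpNorm_one_fst_of_testJet_weakTendsto_zero (hμs : volume s ≠ ∞)
    {φ : ℕ → testFunctions s} {R : ℝ} (hR : ∀ n, ‖testJet hs hw₁ hw₂ (φ n)‖ ≤ R)
    (hφ : WeakTendsto (fun n => testJet hs hw₁ hw₂ (φ n)) 0) :
    Tendsto (fun n => eLpNorm (testJet hs hw₁ hw₂ (φ n)).fst 1 (volume.restrict s)) atTop
      (𝓝 0) := by
  have hcoe (n : ℕ) : eLpNorm (testJet hs hw₁ hw₂ (φ n)).fst 1 (volume.restrict s)
      = ∫⁻ p in s, ‖(φ n : ℝ × ℝ → ℝ) p‖ₑ := by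
    rw [← eLpNorm_one_eq_lintegral_enorm]
    exact eLpNorm_congr_ae ((φ n).2.memLp 2).coeFn_toLp
  have henorm (n : ℕ) : ‖testJet hs hw₁ hw₂ (φ n)‖ₑ ≤ ENNReal.ofReal R := by
    rw [← ofReal_norm]; exact ENNReal.ofReal_le_ofReal (hR n)
  obtain ⟨C, hC, hCφ⟩ := exists_lintegral_enorm_fderiv_le_testJet hs hw₁ hw₂
  have hsupp (n : ℕ) : Function.support (fun p => ‖(φ n : ℝ × ℝ → ℝ) p‖ₑ) ⊆ s := by
    intro p hp
    by_contra h
    exact hp (enorm_eq_zero.2 ((φ n).2.eq_zero_of_notMem h))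
  set A : ℝ≥0∞ := volume s ^ (1 / 2 : ℝ) with hA
  have hA' : A ≠ ∞ := ENNReal.rpow_ne_top_of_nonneg (by norm_num) hμs
  simp_rw [hcoe]
  refine tendsto_setLIntegral_enorm_zero_of_setIntegral_closedBall
    (K := (A + C) * ENNReal.ofReal R) (fun n => (φ n).2.1.of_le (by simp))
    (ENNReal.mul_ne_top (ENNReal.add_ne_top.2 ⟨hA', hC⟩) ENNReal.ofReal_ne_top)
    (fun n => ?_) (fun n => ?_) (fun p r => ?_) hμs
  · rw [← setLIntegral_eq_of_support_subset (hsupp n), ← hcoe]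
    refine (L2Jet.eLpNorm_one_fst_le _).trans ?_
    rw [Measure.restrict_apply_univ, ← hA]
    exact mul_le_mul' le_self_add (henorm n)
  · exact (hCφ (φ n)).trans (mul_le_mul' le_add_self (henorm n))
  · have hball : volume.restrict s (Metric.closedBall p r) ≠ ∞ :=
      ((Measure.restrict_apply_le s _).trans_lt measure_closedBall_lt_top).ne
    simp_rw [setIntegral_testFunction_eq_inner hs hw₁ hw₂ _ measurableSet_closedBall hball]
    simpa only [inner_zero_left] using hφ _

theorem tendsto_eLpNorm_one_fst_sub_of_weakTendsto (hμs : volume s ≠ ∞)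
    {x : ℕ → L2Jet (volume.restrict s)} {y : L2Jet (volume.restrict s)} {R : ℝ}
    (hx : ∀ n, x n ∈ sobolevJets hs hw₁ hw₂) (hR : ∀ n, ‖x n‖ ≤ R) (hxy : WeakTendsto x y) :
    Tendsto (fun n => eLpNorm ((x n).fst - y.fst : ℝ × ℝ → ℝ) 1 (volume.restrict s)) atTop
      (𝓝 0) := by
  have hy : y ∈ sobolevJets hs hw₁ hw₂ :=
    hxy.mem_of_isClosed (Submodule.isClosed_topologicalClosure _) hx
  obtain ⟨φ, hφ⟩ := exists_seq_tendsto_sub_testJet hs hw₁ hw₂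
    fun n => Submodule.sub_mem _ (hx n) hy
  set e : ℕ → L2Jet (volume.restrict s) := fun n => x n - y - testJet hs hw₁ hw₂ (φ n)
  have htest (n : ℕ) : testJet hs hw₁ hw₂ (φ n) = x n - y - e n := (sub_sub_cancel _ _).symm
  obtain ⟨B, hB⟩ := hφ.norm.bddAbove_range
  have hbound (n : ℕ) : ‖testJet hs hw₁ hw₂ (φ n)‖ ≤ R + ‖y‖ + B := by
    rw [htest n]
    exact (norm_sub_le _ _).trans (add_le_add ((norm_sub_le _ _).trans
      (add_le_add_left (hR n) _)) (hB (mem_range_self n)))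
  have hweak : WeakTendsto (fun n => testJet hs hw₁ hw₂ (φ n)) 0 := by
    have h := (hxy.sub (.of_tendsto (tendsto_const_nhds (x := y)))).sub (.of_tendsto hφ)
    rw [sub_self, sub_zero] at h
    simpa only [htest] using h
  have : IsFiniteMeasure (volume.restrict s) := ⟨by simpa using hμs.lt_top⟩
  have hsum := (L2Jet.tendsto_eLpNorm_one_fst_zero hφ).add
    (tendsto_eLpNorm_one_fst_of_testJet_weakTendsto_zero hs hw₁ hw₂ hμs hbound hweak)
  rw [add_zero] at hsum
  refine tendsto_of_tendsto_of_tendsto_of_le_of_le tendsto_const_nhds hsum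
    (fun _ => zero_le) fun n => ?_
  have hdecomp : ((x n).fst - y.fst : ℝ × ℝ → ℝ) =ᵐ[volume.restrict s]
      (e n).fst + (testJet hs hw₁ hw₂ (φ n)).fst := by
    have h : (x n).fst - y.fst = (e n).fst + (testJet hs hw₁ hw₂ (φ n)).fst := by
      rw [← WithLp.sub_fst, ← WithLp.add_fst, sub_add_cancel]
    exact (Lp.coeFn_sub _ _).symm.trans (h ▸ Lp.coeFn_add _ _)
  exact (eLpNorm_congr_ae hdecomp).trans_le
    (eLpNorm_add_le (Lp.aestronglyMeasurable _) (Lp.aestronglyMeasurable _) le_rfl)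

end Compactness

section WeakDerivatives

variable {s : Set (ℝ × ℝ)} {w w₁ w₂ : ℝ × ℝ → ℝ}

theorem IsWeightOn.memLp_inv_mul (hw : IsWeightOn s w) (hs : IsOpen s) {φ : ℝ × ℝ → ℝ}
    (hφ : IsTestOn s φ) : MemLp (fun p => (w p)⁻¹ * φ p) 2 (volume.restrict s) :=
  hφ.memLp_mul hs (hw.continuousOn.inv₀ fun p hp => (hw.pos p hp).ne') 2

theorem IsWeightOn.integral_mul_fderiv_add_eq_zero (hw : IsWeightOn s w) (hs : IsOpen s)
    {φ ψ : ℝ × ℝ → ℝ} (hφ : IsTestOn s φ) (hψ : IsTestOn s ψ) (v : ℝ × ℝ) :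
    (∫ p in s, φ p * fderiv ℝ ψ p v) + ∫ p in s, w p * fderiv ℝ φ p v * ((w p)⁻¹ * ψ p) = 0 := by
  have hcancel : ∫ p in s, w p * fderiv ℝ φ p v * ((w p)⁻¹ * ψ p)
      = ∫ p in s, fderiv ℝ φ p v * ψ p :=
    setIntegral_congr_fun hs.measurableSet fun p hp => by field_simp [(hw.pos p hp).ne']
  rw [hcancel, hφ.integral_mul_fderiv_eq_neg hψ, neg_add_cancel]

theorem IsWeightOn.locallyIntegrableOn_inv_mul (hw : IsWeightOn s w) {g : ℝ × ℝ → ℝ}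
    (hg : MemLp g 2 (volume.restrict s)) :
    LocallyIntegrableOn (fun p => (w p)⁻¹ * g p) s volume :=
  IntegrableOn.locallyIntegrableOn (hw.memLp_inv.integrable_mul hg)

theorem locallyIntegrableOn_of_memLp_two {g : ℝ × ℝ → ℝ} (hg : MemLp g 2 (volume.restrict s)) :
    LocallyIntegrableOn g s volume :=
  locallyIntegrableOn_of_locallyIntegrable_restrict (hg.locallyIntegrable one_le_two)

variable (hs : IsOpen s) (hw₁ : IsWeightOn s w₁) (hw₂ : IsWeightOn s w₂)

theorem inner_eq_zero_of_mem_sobolevJets {x z : L2Jet (volume.restrict s)}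
    (hx : x ∈ sobolevJets hs hw₁ hw₂) (hz : ∀ φ, ⟪testJet hs hw₁ hw₂ φ, z⟫ = 0) : ⟪x, z⟫ = 0 :=
  closure_minimal (t := {x | ⟪x, z⟫ = 0}) (by rintro - ⟨φ, rfl⟩; exact hz φ)
    (isClosed_eq (continuous_id.inner continuous_const) continuous_const) hx

theorem inner_testJet (φ : testFunctions s) {a b c : ℝ × ℝ → ℝ}
    (ha : MemLp a 2 (volume.restrict s)) (hb : MemLp b 2 (volume.restrict s))
    (hc : MemLp c 2 (volume.restrict s)) :
    ⟪testJet hs hw₁ hw₂ φ, L2Jet.mk ha hb hc⟫ = (∫ p in s, (φ : ℝ × ℝ → ℝ) p * a p) +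
      ((∫ p in s, w₁ p * fderiv ℝ (φ : ℝ × ℝ → ℝ) p (1, 0) * b p) +
        ∫ p in s, w₂ p * fderiv ℝ (φ : ℝ × ℝ → ℝ) p (0, 1) * c p) := by
  have hcoe {f g : ℝ × ℝ → ℝ} (hf : MemLp f 2 (volume.restrict s)) :
      ∫ p in s, hf.toLp f p * g p = ∫ p in s, f p * g p :=
    integral_congr_ae (hf.coeFn_toLp.mono fun p hp => by simp only [hp])
  rw [L2Jet.inner_mk]
  exact congrArg₂ _ (hcoe (φ.2.memLp 2)) (congrArg₂ _
    (hcoe ((φ.2.fderiv_apply (1, 0)).memLp_mul hs hw₁.continuousOn 2))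
    (hcoe ((φ.2.fderiv_apply (0, 1)).memLp_mul hs hw₂.continuousOn 2)))

/-- Integration by parts says that jets of test functions are orthogonal to `(∂ₓψ, w₁⁻¹ ψ, 0)`, and
orthogonality passes to the closure. -/
theorem hasWeakDerivXOn_of_mem_sobolevJets {x : L2Jet (volume.restrict s)}
    (hx : x ∈ sobolevJets hs hw₁ hw₂) :
    HasWeakDerivXOn s x.fst fun p => (w₁ p)⁻¹ * x.snd.fst p := by
  refine ⟨locallyIntegrableOn_of_memLp_two (Lp.memLp _),
    hw₁.locallyIntegrableOn_inv_mul (Lp.memLp _), fun ψ hψ => ?_⟩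
  have horth := inner_eq_zero_of_mem_sobolevJets hs hw₁ hw₂ hx
    (z := L2Jet.mk ((hψ.fderiv_apply (1, 0)).memLp 2) (hw₁.memLp_inv_mul hs hψ) MemLp.zero)
    fun φ => by
      rw [inner_testJet]
      simpa using hw₁.integral_mul_fderiv_add_eq_zero hs φ.2 hψ (1, 0)
  rw [L2Jet.inner_mk] at horth
  simpa [pdx, mul_comm, mul_left_comm, mul_assoc] using eq_neg_of_add_eq_zero_left horth

theorem hasWeakDerivYOn_of_mem_sobolevJets {x : L2Jet (volume.restrict s)}
    (hx : x ∈ sobolevJets hs hw₁ hw₂) :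
    HasWeakDerivYOn s x.fst fun p => (w₂ p)⁻¹ * x.snd.snd p := by
  refine ⟨locallyIntegrableOn_of_memLp_two (Lp.memLp _),
    hw₂.locallyIntegrableOn_inv_mul (Lp.memLp _), fun ψ hψ => ?_⟩
  have horth := inner_eq_zero_of_mem_sobolevJets hs hw₁ hw₂ hx
    (z := L2Jet.mk ((hψ.fderiv_apply (0, 1)).memLp 2) MemLp.zero (hw₂.memLp_inv_mul hs hψ))
    fun φ => by
      rw [inner_testJet]
      simpa using hw₂.integral_mul_fderiv_add_eq_zero hs φ.2 hψ (0, 1)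
  rw [L2Jet.inner_mk] at horth
  simpa [pdy, mul_comm, mul_left_comm, mul_assoc] using eq_neg_of_add_eq_zero_left horth

end WeakDerivatives

section SmoothAbs

variable {ε : ℝ}

/-- A smooth approximation of the absolute value, vanishing at the origin and `1`-Lipschitz, so
that composition with it preserves test functions and does not increase their energy. -/
def smoothAbs (ε t : ℝ) : ℝ := √(t ^ 2 + ε ^ 2) - ε

theorem contDiff_smoothAbs (hε : 0 < ε) : ContDiff ℝ (⊤ : ℕ∞) (smoothAbs ε) :=
  (ContDiff.sqrt (by fun_prop) fun x => by positivity).sub contDiff_const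

theorem smoothAbs_zero (hε : 0 ≤ ε) : smoothAbs ε 0 = 0 := by
  simp [smoothAbs, Real.sqrt_sq hε]

theorem abs_smoothAbs_sub_abs_le (hε : 0 ≤ ε) (t : ℝ) : |smoothAbs ε t - (|t|)| ≤ ε := by
  have hlower : |t| ≤ √(t ^ 2 + ε ^ 2) := Real.abs_le_sqrt (by linarith [sq_nonneg ε])
  have hupper : √(t ^ 2 + ε ^ 2) ≤ |t| + ε := by
    refine Real.sqrt_le_iff.2 ⟨by positivity, ?_⟩
    nlinarith [sq_abs t, abs_nonneg t]
  rw [abs_le, smoothAbs]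
  constructor <;> linarith

theorem abs_deriv_smoothAbs_le_one (hε : 0 < ε) (t : ℝ) : |deriv (smoothAbs ε) t| ≤ 1 := by
  have hpos : 0 < √(t ^ 2 + ε ^ 2) := by positivity
  have hderiv : HasDerivAt (smoothAbs ε) (2 * t / (2 * √(t ^ 2 + ε ^ 2))) t := by
    have hsq : HasDerivAt (fun t : ℝ => t ^ 2 + ε ^ 2) (2 * t) t := by
      simpa using (hasDerivAt_pow 2 t).add_const (ε ^ 2)
    exact (hsq.sqrt (by positivity)).sub_const ε
  rw [hderiv.deriv, mul_div_mul_left _ _ two_ne_zero, abs_div, abs_of_pos hpos, div_le_one hpos]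
  exact Real.abs_le_sqrt (by linarith [sq_nonneg ε])

theorem abs_fderiv_smoothAbs_comp_le (hε : 0 < ε) {E : Type*} [NormedAddCommGroup E]
    [NormedSpace ℝ E] {φ : E → ℝ} {p : E} (hφ : DifferentiableAt ℝ φ p) (v : E) :
    |fderiv ℝ (smoothAbs ε ∘ φ) p v| ≤ |fderiv ℝ φ p v| := by
  have hf : DifferentiableAt ℝ (smoothAbs ε) (φ p) :=
    (contDiff_smoothAbs hε).differentiable (by simp) _
  rw [fderiv_comp p hf hφ, ContinuousLinearMap.comp_apply, fderiv_eq_smul_deriv,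
    smul_eq_mul, abs_mul]
  exact mul_le_of_le_one_right (abs_nonneg _) (abs_deriv_smoothAbs_le_one hε _)

end SmoothAbs

theorem norm_le_norm_fst_add_norm_snd {E F : Type*} [SeminormedAddCommGroup E]
    [SeminormedAddCommGroup F] (x : WithLp 2 (E × F)) : ‖x‖ ≤ ‖x.fst‖ + ‖x.snd‖ := by
  refine le_of_sq_le_sq ?_ (by positivity)
  rw [WithLp.prod_norm_sq_eq_of_L2]
  nlinarith [norm_nonneg x.fst, norm_nonneg x.snd]

section AbsoluteValue

variable {s : Set (ℝ × ℝ)} {w₁ w₂ : ℝ × ℝ → ℝ} (hs : IsOpen s) (hw₁ : IsWeightOn s w₁)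
  (hw₂ : IsWeightOn s w₂)

theorem norm_snd_testJet_le_of_abs_fderiv_le {φ ψ : testFunctions s}
    (h : ∀ p v, |fderiv ℝ (φ : ℝ × ℝ → ℝ) p v| ≤ |fderiv ℝ (ψ : ℝ × ℝ → ℝ) p v|) :
    ‖(testJet hs hw₁ hw₂ φ).snd‖ ≤ ‖(testJet hs hw₁ hw₂ ψ).snd‖ := by
  have hmono {w : ℝ × ℝ → ℝ} (hw : ContinuousOn w s) (v : ℝ × ℝ) :
      ‖((φ.2.fderiv_apply v).memLp_mul hs hw 2).toLp‖
        ≤ ‖((ψ.2.fderiv_apply v).memLp_mul hs hw 2).toLp‖ := by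
    refine Lp.norm_le_norm_of_ae_le ?_
    filter_upwards [MemLp.coeFn_toLp ((φ.2.fderiv_apply v).memLp_mul hs hw 2),
      MemLp.coeFn_toLp ((ψ.2.fderiv_apply v).memLp_mul hs hw 2)] with p hφp hψp
    rw [hφp, hψp, norm_mul, norm_mul]
    exact mul_le_mul_of_nonneg_left (h p v) (norm_nonneg _)
  refine le_of_sq_le_sq ?_ (norm_nonneg _)
  rw [WithLp.prod_norm_sq_eq_of_L2, WithLp.prod_norm_sq_eq_of_L2]
  exact add_le_add (pow_le_pow_left₀ (norm_nonneg _) (hmono hw₁.continuousOn (1, 0)) 2)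
    (pow_le_pow_left₀ (norm_nonneg _) (hmono hw₂.continuousOn (0, 1)) 2)

theorem exists_testJet_fst_near_abs [IsFiniteMeasure (volume.restrict s)] (φ : testFunctions s)
    {ε : ℝ} (hε : 0 < ε) : ∃ ψ,
      ‖(testJet hs hw₁ hw₂ ψ).fst - |(testJet hs hw₁ hw₂ φ).fst|‖
        ≤ measureUnivNNReal (volume.restrict s) ^ (2 : ℝ≥0∞).toReal⁻¹ * ε ∧
      ‖(testJet hs hw₁ hw₂ ψ).snd‖ ≤ ‖(testJet hs hw₁ hw₂ φ).snd‖ := by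
  have hψ : IsTestOn s (smoothAbs ε ∘ φ) := φ.2.comp (contDiff_smoothAbs hε) (smoothAbs_zero hε.le)
  refine ⟨⟨_, hψ⟩, Lp.norm_le_of_ae_bound hε.le ?_, norm_snd_testJet_le_of_abs_fderiv_le hs hw₁ hw₂
    fun p v => abs_fderiv_smoothAbs_comp_le hε (φ.2.differentiable p) v⟩
  filter_upwards [Lp.coeFn_sub (testJet hs hw₁ hw₂ ⟨_, hψ⟩).fst |(testJet hs hw₁ hw₂ φ).fst|,
    Lp.coeFn_abs (testJet hs hw₁ hw₂ φ).fst, (φ.2.memLp 2).coeFn_toLp, (hψ.memLp 2).coeFn_toLp]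
    with p hsub habs hφp hψp
  rw [hsub, Pi.sub_apply, habs]
  exact (congrArg₂ (fun a b : ℝ => ‖a - |b|‖) hψp hφp).trans_le (abs_smoothAbs_sub_abs_le hε.le _)

theorem exists_mem_sobolevJets_fst_eq_abs [IsFiniteMeasure (volume.restrict s)]
    {x : L2Jet (volume.restrict s)} (hx : x ∈ sobolevJets hs hw₁ hw₂) :
    ∃ y ∈ sobolevJets hs hw₁ hw₂, y.fst = |x.fst| ∧ ‖y.snd‖ ≤ ‖x.snd‖ := by
  obtain ⟨φ, hφ⟩ := exists_seq_tendsto_sub_testJet hs hw₁ hw₂ fun _ : ℕ => hx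
  have hφx : Tendsto (fun n => testJet hs hw₁ hw₂ (φ n)) atTop (𝓝 x) := by
    simpa using (tendsto_const_nhds (x := x)).sub hφ
  choose ψ hψfst hψsnd using fun n : ℕ =>
    exists_testJet_fst_near_abs hs hw₁ hw₂ (φ n) (Nat.one_div_pos_of_nat (n := n) (α := ℝ))
  have hfst : Tendsto (fun n => (testJet hs hw₁ hw₂ (ψ n)).fst) atTop (𝓝 |x.fst|) := by
    have habs : Tendsto (fun n => |(testJet hs hw₁ hw₂ (φ n)).fst|) atTop (𝓝 |x.fst|) :=
      tendsto_iff_norm_sub_tendsto_zero.2 <| squeeze_zero (fun _ => norm_nonneg _)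
        (fun n => (norm_abs_sub_abs _ _).trans
          (WithLp.norm_fst_le _ (testJet hs hw₁ hw₂ (φ n) - x)))
        (tendsto_iff_norm_sub_tendsto_zero.1 hφx)
    have hscale := tendsto_one_div_add_atTop_nhds_zero_nat (𝕜 := ℝ).const_mul
      (measureUnivNNReal (volume.restrict s) ^ (2 : ℝ≥0∞).toReal⁻¹ : ℝ)
    rw [mul_zero] at hscale
    simpa using (squeeze_zero_norm hψfst hscale).add habs
  have hsnd : Tendsto (fun n => ‖(testJet hs hw₁ hw₂ (φ n)).snd‖) atTop (𝓝 ‖x.snd‖) :=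
    ((WithLp.sndL 2 ℝ _ _).continuous.tendsto x).norm.comp hφx
  obtain ⟨R, hR⟩ : ∃ R, ∀ n, ‖testJet hs hw₁ hw₂ (ψ n)‖ ≤ R := by
    obtain ⟨A, hA⟩ := hfst.norm.bddAbove_range
    obtain ⟨B, hB⟩ := hsnd.bddAbove_range
    exact ⟨A + B, fun n => (norm_le_norm_fst_add_norm_snd _).trans
      (add_le_add (hA (mem_range_self n)) ((hψsnd n).trans (hB (mem_range_self n))))⟩
  obtain ⟨y, σ, hσ, hy⟩ := exists_subseq_weakTendsto hR
  refine ⟨y, hy.mem_of_isClosed (Submodule.isClosed_topologicalClosure _) fun n =>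
    Submodule.le_topologicalClosure _ (LinearMap.mem_range_self _ _),
    (hy.map (WithLp.fstL 2 ℝ _ _)).unique (.of_tendsto (hfst.comp hσ.tendsto_atTop)),
    (hy.map (WithLp.sndL 2 ℝ _ _)).norm_le_of_tendsto (fun n => hψsnd (σ n))
      (hsnd.comp hσ.tendsto_atTop)⟩

end AbsoluteValue

namespace L2Jet

section Energy

variable {α : Type*} {m : MeasurableSpace α} {μ : Measure α} {M : ℝ} {r : ℝ≥0∞}

/-- The numerator `a₁(u, u) + M ‖u‖²_r` of the functional `J`. It has a junk value when the first
component is not in `L^r`. -/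
def penalizedEnergy (M : ℝ) (r : ℝ≥0∞) (x : L2Jet μ) : ℝ :=
  ‖x.snd‖ ^ 2 + M * (eLpNorm x.fst r μ).toReal ^ 2

/-- The functional `J`. -/
def rayleighQuotient (M : ℝ) (r : ℝ≥0∞) (x : L2Jet μ) : ℝ :=
  penalizedEnergy M r x / ‖x.fst‖ ^ 2

theorem norm_sq_snd_le_penalizedEnergy (hM : 0 ≤ M) (x : L2Jet μ) :
    ‖x.snd‖ ^ 2 ≤ penalizedEnergy M r x :=
  le_add_of_nonneg_right (by positivity)

theorem penalizedEnergy_nonneg (hM : 0 ≤ M) (x : L2Jet μ) : 0 ≤ penalizedEnergy M r x :=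
  (sq_nonneg _).trans (norm_sq_snd_le_penalizedEnergy hM x)

theorem eLpNorm_le_of_norm_sq_snd_add_le (hM : 0 < M) {x : L2Jet μ} (hx : MemLp x.fst r μ)
    {l e : ℝ} (hl : l ≤ ‖x.snd‖ ^ 2) (he : penalizedEnergy M r x ≤ e) :
    eLpNorm x.fst r μ ≤ ENNReal.ofReal √((e - l) / M) := by
  rw [← ENNReal.ofReal_toReal hx.2.ne]
  refine ENNReal.ofReal_le_ofReal (Real.le_sqrt_of_sq_le ?_)
  rw [le_div_iff₀ hM, mul_comm]
  rw [penalizedEnergy] at he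
  linarith

theorem penalizedEnergy_smul (c : ℝ) (x : L2Jet μ) :
    penalizedEnergy M r (c • x) = c ^ 2 * penalizedEnergy M r x := by
  have hfst : (eLpNorm (c • x).fst r μ).toReal = |c| * (eLpNorm x.fst r μ).toReal := by
    rw [WithLp.smul_fst, eLpNorm_congr_ae (Lp.coeFn_smul c x.fst), eLpNorm_const_smul,
      ENNReal.toReal_mul, toReal_enorm, Real.norm_eq_abs]
  rw [penalizedEnergy, penalizedEnergy, hfst, WithLp.smul_snd, norm_smul, Real.norm_eq_abs,
    mul_pow, mul_pow, sq_abs]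
  ring

theorem penalizedEnergy_le_of_fst_eq_abs {x y : L2Jet μ} (hfst : y.fst = |x.fst|)
    (hsnd : ‖y.snd‖ ≤ ‖x.snd‖) : penalizedEnergy M r y ≤ penalizedEnergy M r x := by
  have h : eLpNorm y.fst r μ = eLpNorm x.fst r μ := by
    rw [hfst]
    exact eLpNorm_congr_norm_ae ((Lp.coeFn_abs x.fst).mono fun p hp => by
      rw [hp, norm_abs_eq_norm])
  rw [penalizedEnergy, penalizedEnergy, h]
  gcongr

theorem memLp_and_penalizedEnergy_le_of_weakTendsto (hM : 0 < M) {x : ℕ → L2Jet μ} {y : L2Jet μ}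
    (hx : ∀ n, MemLp (x n).fst r μ) (hxy : WeakTendsto x y)
    (hfst : Tendsto (fun n => (x n).fst) atTop (𝓝 y.fst)) {e : ℝ}
    (he : Tendsto (fun n => penalizedEnergy M r (x n)) atTop (𝓝 e)) :
    MemLp y.fst r μ ∧ penalizedEnergy M r y ≤ e := by
  obtain ⟨l, hl, hlim⟩ := (hxy.map (WithLp.sndL 2 ℝ _ _)).exists_le_norm_sq
  have hle : eLpNorm y.fst r μ ≤ ENNReal.ofReal √((e - ‖y.snd‖ ^ 2) / M) :=
    eLpNorm_le_of_tendstoInMeasure (fun n => (hx n).1)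
      (tendstoInMeasure_of_tendsto_Lp hfst)
      (fun n => eLpNorm_le_of_norm_sq_snd_add_le hM (hx n) (hl n) le_rfl)
      (ENNReal.tendsto_ofReal ((he.sub hlim).div_const M).sqrt)
  have hnonneg : ‖y.snd‖ ^ 2 ≤ e := le_of_tendsto_of_tendsto' hlim he fun n =>
    (hl n).trans (norm_sq_snd_le_penalizedEnergy hM.le _)
  refine ⟨⟨Lp.aestronglyMeasurable _, hle.trans_lt ENNReal.ofReal_lt_top⟩, ?_⟩
  have hsq : (eLpNorm y.fst r μ).toReal ^ 2 ≤ (e - ‖y.snd‖ ^ 2) / M :=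
    (Real.le_sqrt ENNReal.toReal_nonneg (div_nonneg (sub_nonneg.2 hnonneg) hM.le)).1
      (ENNReal.toReal_le_of_le_ofReal (Real.sqrt_nonneg _) hle)
  rw [le_div_iff₀ hM, mul_comm] at hsq
  rw [penalizedEnergy]
  linarith

end Energy

end L2Jet

section Minimization

variable {s : Set (ℝ × ℝ)} {w₁ w₂ : ℝ × ℝ → ℝ} (hs : IsOpen s) (hw₁ : IsWeightOn s w₁)
  (hw₂ : IsWeightOn s w₂) {M : ℝ} {r : ℝ≥0∞}

open L2Jet

theorem tendsto_fst_of_weakTendsto (hμs : volume s ≠ ∞) (hr : 2 < r)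
    {x : ℕ → L2Jet (volume.restrict s)} {y : L2Jet (volume.restrict s)} {R : ℝ} {C : ℝ≥0∞}
    (hx : ∀ n, x n ∈ sobolevJets hs hw₁ hw₂) (hR : ∀ n, ‖x n‖ ≤ R) (hC : C ≠ ∞)
    (hxC : ∀ n, eLpNorm (x n).fst r (volume.restrict s) ≤ C) (hxy : WeakTendsto x y) :
    Tendsto (fun n => (x n).fst) atTop (𝓝 y.fst) := by
  have : IsFiniteMeasure (volume.restrict s) := ⟨by simpa using hμs.lt_top⟩
  rw [Lp.tendsto_Lp_iff_tendsto_eLpNorm']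
  refine tendsto_eLpNorm_sub_of_tendstoInMeasure_of_eLpNorm_le
    (fun n => Lp.aestronglyMeasurable _) (Lp.memLp _) one_le_two hr hC hxC ?_
  exact tendstoInMeasure_of_tendsto_eLpNorm one_ne_zero (fun n => Lp.aestronglyMeasurable _)
    (Lp.aestronglyMeasurable _)
    (tendsto_eLpNorm_one_fst_sub_of_weakTendsto hs hw₁ hw₂ hμs hx hR hxy)

/-- The admissible functions for the minimization of `J`, normalized in `L²`. -/
def unitSobolevJets (r : ℝ≥0∞) : Set (L2Jet (volume.restrict s)) :=
  {x | x ∈ sobolevJets hs hw₁ hw₂ ∧ MemLp x.fst r (volume.restrict s) ∧ ‖x.fst‖ = 1}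

theorem norm_inv_smul_mem_unitSobolevJets {x : L2Jet (volume.restrict s)}
    (hx : x ∈ sobolevJets hs hw₁ hw₂) (hxr : MemLp x.fst r (volume.restrict s)) (hx0 : x.fst ≠ 0) :
    ‖x.fst‖⁻¹ • x ∈ unitSobolevJets hs hw₁ hw₂ r := by
  refine ⟨Submodule.smul_mem _ _ hx, (hxr.const_smul _).ae_eq (Lp.coeFn_smul _ _).symm, ?_⟩
  rw [WithLp.smul_fst, norm_smul, norm_inv, norm_norm, inv_mul_cancel₀ (norm_ne_zero_iff.2 hx0)]

theorem unitSobolevJets_nonempty (hs' : s.Nonempty) : (unitSobolevJets hs hw₁ hw₂ r).Nonempty := by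
  obtain ⟨p, hp⟩ := hs'
  obtain ⟨φ, hφ, hφp⟩ := exists_isTestOn_ne_zero (hs.mem_nhds hp)
  have hcoe : (testJet hs hw₁ hw₂ ⟨φ, hφ⟩).fst =ᵐ[volume.restrict s] φ := (hφ.memLp 2).coeFn_toLp
  refine ⟨_, norm_inv_smul_mem_unitSobolevJets hs hw₁ hw₂ (Submodule.le_topologicalClosure _
    (LinearMap.mem_range_self _ ⟨φ, hφ⟩)) ((hφ.memLp r).ae_eq hcoe.symm) fun h => hφp ?_⟩
  rw [Lp.eq_zero_iff_ae_eq_zero] at h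
  have hzero : ∀ᵐ p, φ p = 0 := by
    filter_upwards [(ae_restrict_iff' hs.measurableSet).1 (hcoe.symm.trans h)] with p hp
    exact (em (p ∈ s)).elim hp hφ.eq_zero_of_notMem
  exact congrFun ((hφ.continuous.ae_eq_iff_eq volume continuous_const).1 hzero) p

theorem exists_isMinOn_penalizedEnergy (hs' : s.Nonempty) (hμs : volume s ≠ ∞) (hr : 2 < r)
    (hM : 0 < M) :
    ∃ x ∈ unitSobolevJets hs hw₁ hw₂ r,
      IsMinOn (penalizedEnergy M r) (unitSobolevJets hs hw₁ hw₂ r) x := by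
  have hbdd : BddBelow (penalizedEnergy M r '' unitSobolevJets hs hw₁ hw₂ r) :=
    ⟨0, forall_mem_image.2 fun x _ => penalizedEnergy_nonneg hM.le x⟩
  obtain ⟨e, -, he, heA⟩ := exists_seq_tendsto_sInf
    ((unitSobolevJets_nonempty hs hw₁ hw₂ hs').image (penalizedEnergy M r)) hbdd
  choose x hx hxe using heA
  obtain rfl : e = fun n => penalizedEnergy M r (x n) := funext fun n => (hxe n).symm
  obtain ⟨B, hB⟩ := he.bddAbove_range
  replace hB (n : ℕ) : penalizedEnergy M r (x n) ≤ B := hB (mem_range_self n)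
  have hR (n : ℕ) : ‖x n‖ ≤ √(1 + B) := by
    refine Real.le_sqrt_of_sq_le ?_
    rw [WithLp.prod_norm_sq_eq_of_L2, (hx n).2.2, one_pow]
    exact add_le_add_right ((norm_sq_snd_le_penalizedEnergy hM.le _).trans (hB n)) 1
  obtain ⟨y, σ, hσ, hy⟩ := exists_subseq_weakTendsto hR
  have hfst : Tendsto (fun n => (x (σ n)).fst) atTop (𝓝 y.fst) :=
    tendsto_fst_of_weakTendsto hs hw₁ hw₂ hμs hr (fun n => (hx (σ n)).1) (fun n => hR (σ n))
      ENNReal.ofReal_ne_top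
      (fun n => eLpNorm_le_of_norm_sq_snd_add_le hM (hx _).2.1 (sq_nonneg _) (hB _)) hy
  obtain ⟨hyr, hye⟩ := memLp_and_penalizedEnergy_le_of_weakTendsto hM (fun n => (hx (σ n)).2.1) hy
    hfst (he.comp hσ.tendsto_atTop)
  have hynorm : ‖y.fst‖ = 1 :=
    tendsto_nhds_unique hfst.norm (tendsto_const_nhds.congr fun n => (hx (σ n)).2.2.symm)
  exact ⟨y, ⟨hy.mem_of_isClosed (Submodule.isClosed_topologicalClosure _) fun n => (hx (σ n)).1,
    hyr, hynorm⟩, fun z hz => hye.trans (csInf_le hbdd (mem_image_of_mem _ hz))⟩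

theorem exists_nonneg_forall_rayleighQuotient_le (hs' : s.Nonempty) (hμs : volume s ≠ ∞)
    (hr : 2 < r) (hM : 0 < M) :
    ∃ z ∈ unitSobolevJets hs hw₁ hw₂ r, 0 ≤ z.fst ∧
      ∀ x ∈ sobolevJets hs hw₁ hw₂, MemLp x.fst r (volume.restrict s) → x.fst ≠ 0 →
        rayleighQuotient M r z ≤ rayleighQuotient M r x := by
  obtain ⟨y, ⟨hyV, hyr, hy1⟩, hmin⟩ :=
    exists_isMinOn_penalizedEnergy hs hw₁ hw₂ (r := r) hs' hμs hr hM
  have : IsFiniteMeasure (volume.restrict s) := ⟨by simpa using hμs.lt_top⟩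
  obtain ⟨z, hzV, hzfst, hzsnd⟩ := exists_mem_sobolevJets_fst_eq_abs hs hw₁ hw₂ hyV
  have hz1 : ‖z.fst‖ = 1 := by rw [hzfst, norm_abs_eq_norm, hy1]
  have hzr : MemLp z.fst r (volume.restrict s) := by
    rw [hzfst]
    exact hyr.abs.ae_eq (Lp.coeFn_abs _).symm
  refine ⟨z, ⟨hzV, hzr, hz1⟩, hzfst ▸ abs_nonneg _, fun x hx hxr hx0 => ?_⟩
  calc rayleighQuotient M r z = penalizedEnergy M r z := by
        rw [rayleighQuotient, hz1, one_pow, div_one]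
    _ ≤ penalizedEnergy M r y := penalizedEnergy_le_of_fst_eq_abs hzfst hzsnd
    _ ≤ penalizedEnergy M r (‖x.fst‖⁻¹ • x) :=
        hmin (norm_inv_smul_mem_unitSobolevJets hs hw₁ hw₂ hx hxr hx0)
    _ = rayleighQuotient M r x := by
        rw [penalizedEnergy_smul, rayleighQuotient, inv_pow, inv_mul_eq_div]

end Minimization

theorem isOpen_Omega : IsOpen Omega := isOpen_Ioo.prod isOpen_Ioo

theorem Omega_nonempty : Omega.Nonempty :=
  (nonempty_Ioo.2 one_pos).prod (nonempty_Ioo.2 one_pos)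

theorem volume_Omega : volume Omega = 1 := by
  rw [Omega, Measure.volume_eq_prod, Measure.prod_prod]
  simp

theorem volume_restrict_Omega : volume.restrict Omega =
    (volume.restrict (Ioo (0 : ℝ) 1)).prod (volume.restrict (Ioo (0 : ℝ) 1)) := by
  rw [Omega, Measure.volume_eq_prod, Measure.prod_restrict]

theorem memLp_inv_rpow_Ioo {α : ℝ} (hα : α < 1 / 2) :
    MemLp (fun x : ℝ => (x ^ α)⁻¹) 2 (volume.restrict (Ioo (0 : ℝ) 1)) := by
  rw [memLp_two_iff_integrable_sq (by fun_prop)]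
  have hint : IntegrableOn (fun x : ℝ => x ^ (-(2 * α))) (Ioo (0 : ℝ) 1) := by
    rw [intervalIntegral.integrableOn_Ioo_rpow_iff one_pos]
    linarith
  refine hint.congr_fun (fun x hx => ?_) measurableSet_Ioo
  dsimp only
  rw [← Real.rpow_neg hx.1.le, ← Real.rpow_mul_natCast hx.1.le]
  congr 1
  push_cast
  ring

theorem isWeightOn_Omega_snd_rpow {α : ℝ} (hα : α < 1 / 2) :
    IsWeightOn Omega fun p => p.2 ^ α where
  continuousOn := continuousOn_snd.rpow_const fun p hp => Or.inl hp.2.1.ne'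
  pos p hp := Real.rpow_pos_of_pos hp.2.1 _
  memLp_inv := by
    rw [volume_restrict_Omega]
    exact (memLp_inv_rpow_Ioo hα).comp_snd _

theorem isWeightOn_Omega_fst_rpow {α : ℝ} (hα : α < 1 / 2) :
    IsWeightOn Omega fun p => p.1 ^ α where
  continuousOn := continuousOn_fst.rpow_const fun p hp => Or.inl hp.1.1.ne'
  pos p hp := Real.rpow_pos_of_pos hp.1.1 _
  memLp_inv := by
    rw [volume_restrict_Omega]
    exact (memLp_inv_rpow_Ioo hα).comp_fst _

theorem integral_abs_rpow_rpow_inv_eq_sq_eLpNorm {α : Type*} {m : MeasurableSpace α}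
    {μ : Measure α} {q : ℝ} (hq : 0 < q) {f : α → ℝ} (hf : MemLp f (ENNReal.ofReal (2 * q)) μ) :
    (∫ p, |f p| ^ (2 * q) ∂μ) ^ (1 / q) = (eLpNorm f (ENNReal.ofReal (2 * q)) μ).toReal ^ 2 := by
  have h2q : 0 < 2 * q := by positivity
  have hnorm : 0 ≤ ∫ p, |f p| ^ (2 * q) ∂μ := integral_nonneg fun p => by positivity
  rw [hf.eLpNorm_eq_integral_rpow_norm (by simpa using hq) ENNReal.ofReal_ne_top,
    ENNReal.toReal_ofReal h2q.le]
  simp only [Real.norm_eq_abs]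
  rw [ENNReal.toReal_ofReal (by positivity), ← Real.rpow_mul_natCast hnorm]
  congr 1
  field_simp
  norm_num

section Omega

variable {α₁ α₂ : ℝ} {u gx gy : ℝ × ℝ → ℝ}

/-- The jet `(u, y^α₁ ∂ₓu, x^α₂ ∂_yu)` of an element of `𝓗¹(Ω)`. -/
def MemH1.jet (h : MemH1 α₁ α₂ u gx gy) : L2Jet (volume.restrict Omega) :=
  L2Jet.mk h.memL2 h.wgx h.wgy

theorem MemH1.fst_jet_ae_eq (h : MemH1 α₁ α₂ u gx gy) :
    h.jet.fst =ᵐ[volume.restrict Omega] u :=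
  h.memL2.coeFn_toLp

theorem a1Form_eq_norm_sq_snd_jet (h : MemH1 α₁ α₂ u gx gy) :
    a1Form α₁ α₂ u gx gy u gx gy = ‖h.jet.snd‖ ^ 2 := by
  rw [MemH1.jet, L2Jet.norm_sq_snd_mk, ← integral_add h.wgx.integrable_sq h.wgy.integrable_sq,
    a1Form]
  simp only [sq]

theorem Jfun_eq_rayleighQuotient_jet {M q : ℝ} (hq : 0 < q) (h : MemH1 α₁ α₂ u gx gy)
    (hu : MemLp u (ENNReal.ofReal (2 * q)) (volume.restrict Omega)) :
    Jfun α₁ α₂ M q u gx gy = L2Jet.rayleighQuotient M (ENNReal.ofReal (2 * q)) h.jet := by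
  rw [Jfun, L2Jet.rayleighQuotient, L2Jet.penalizedEnergy, a1Form_eq_norm_sq_snd_jet h,
    integral_abs_rpow_rpow_inv_eq_sq_eLpNorm hq hu, eLpNorm_congr_ae h.fst_jet_ae_eq, MemH1.jet,
    L2Jet.norm_sq_fst_mk]

theorem H1Norm_sub_eq_norm_jet_sub_testJet (hα₁ : α₁ < 1 / 2) (hα₂ : α₂ < 1 / 2)
    (h : MemH1 α₁ α₂ u gx gy) (φ : testFunctions Omega) :
    H1Norm α₁ α₂ (fun p => u p - (φ : ℝ × ℝ → ℝ) p) (fun p => gx p - pdx φ p)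
        (fun p => gy p - pdy φ p) =
      ‖h.jet - testJet isOpen_Omega (isWeightOn_Omega_snd_rpow hα₁)
        (isWeightOn_Omega_fst_rpow hα₂) φ‖ := by
  rw [← Real.sqrt_sq (norm_nonneg (h.jet - _)), WithLp.prod_norm_sq_eq_of_L2, H1Norm, add_assoc,
    MemH1.jet, testJet, LinearMap.coe_mk, AddHom.coe_mk, ← L2Jet.mk_sub, L2Jet.norm_sq_fst_mk,
    L2Jet.norm_sq_snd_mk]
  simp only [Pi.sub_apply, mul_sub, pdx, pdy]

theorem memH10_iff_jet_mem_sobolevJets (hα₁ : α₁ < 1 / 2) (hα₂ : α₂ < 1 / 2)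
    (h : MemH1 α₁ α₂ u gx gy) :
    MemH10 α₁ α₂ u gx gy ↔ h.jet ∈ sobolevJets isOpen_Omega (isWeightOn_Omega_snd_rpow hα₁)
      (isWeightOn_Omega_fst_rpow hα₂) := by
  rw [sobolevJets, ← SetLike.mem_coe, Submodule.topologicalClosure_coe, Metric.mem_closure_iff,
    MemH10, and_iff_right h]
  refine forall₂_congr fun ε _ => ⟨?_, ?_⟩
  · rintro ⟨φ, hφ, hε⟩
    refine ⟨_, LinearMap.mem_range_self _ ⟨φ, hφ⟩, ?_⟩
    rwa [dist_eq_norm, ← H1Norm_sub_eq_norm_jet_sub_testJet hα₁ hα₂ h ⟨φ, hφ⟩]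
  · rintro ⟨_, ⟨φ, rfl⟩, hε⟩
    exact ⟨φ, φ.2, by rwa [H1Norm_sub_eq_norm_jet_sub_testJet hα₁ hα₂ h, ← dist_eq_norm]⟩

theorem exists_memH1_jet_eq (hα₁ : α₁ < 1 / 2) (hα₂ : α₂ < 1 / 2)
    {x : L2Jet (volume.restrict Omega)}
    (hx : x ∈ sobolevJets isOpen_Omega (isWeightOn_Omega_snd_rpow hα₁)
      (isWeightOn_Omega_fst_rpow hα₂)) :
    ∃ gx gy, ∃ h : MemH1 α₁ α₂ x.fst gx gy, h.jet = x := by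
  have cancel {w : ℝ × ℝ → ℝ} (hw : IsWeightOn Omega w) (f : ℝ × ℝ → ℝ) :
      f =ᵐ[volume.restrict Omega] fun p => w p * ((w p)⁻¹ * f p) := by
    filter_upwards [ae_restrict_mem isOpen_Omega.measurableSet] with p hp
    rw [mul_inv_cancel_left₀ (hw.pos p hp).ne']
  have hgx := cancel (isWeightOn_Omega_snd_rpow hα₁) x.snd.fst
  have hgy := cancel (isWeightOn_Omega_fst_rpow hα₂) x.snd.snd
  refine ⟨_, _, ⟨Lp.memLp _, hasWeakDerivXOn_of_mem_sobolevJets _ _ _ hx,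
    hasWeakDerivYOn_of_mem_sobolevJets _ _ _ hx, (Lp.memLp _).ae_eq hgx,
    (Lp.memLp _).ae_eq hgy⟩, ?_⟩
  conv_rhs => rw [← L2Jet.mk_coeFn x]
  exact L2Jet.mk_congr_ae .rfl hgx.symm hgy.symm

end Omega

theorem J_attains_minimum_general (α₁ α₂ qe M : ℝ) (hα₁ : α₁ < 1 / 2) (hα₂ : α₂ < 1 / 2)
    (hq : 1 < qe) (hM : 0 < M) :
    ∃ z zx zy : ℝ × ℝ → ℝ, MemU α₁ α₂ qe z zx zy ∧
      (∀ᵐ p ∂(volume.restrict Omega), 0 ≤ z p) ∧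
      (∀ u gx gy : ℝ × ℝ → ℝ, MemU α₁ α₂ qe u gx gy →
        Jfun α₁ α₂ M qe z zx zy ≤ Jfun α₁ α₂ M qe u gx gy) := by
  have hq₀ : 0 < qe := one_pos.trans hq
  have hr : 2 < ENNReal.ofReal (2 * qe) := by
    rw [ENNReal.lt_ofReal_iff_toReal_lt ENNReal.ofNat_ne_top, ENNReal.toReal_ofNat]
    linarith
  obtain ⟨z, ⟨hzV, hzr, hz1⟩, hz0, hmin⟩ := exists_nonneg_forall_rayleighQuotient_le isOpen_Omega
    (isWeightOn_Omega_snd_rpow hα₁) (isWeightOn_Omega_fst_rpow hα₂) Omega_nonempty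
    (volume_Omega ▸ ENNReal.one_ne_top) hr hM
  obtain ⟨zx, zy, hz, hjet⟩ := exists_memH1_jet_eq hα₁ hα₂ hzV
  refine ⟨z.fst, zx, zy, ⟨(memH10_iff_jet_mem_sobolevJets hα₁ hα₂ hz).2 (hjet.symm ▸ hzV), hzr,
    fun h => ?_⟩, (Lp.coeFn_nonneg _).2 hz0, fun u gx gy ⟨huV, hur, hu0⟩ => ?_⟩
  · rw [(Lp.eq_zero_iff_ae_eq_zero).2 h, norm_zero] at hz1
    exact zero_ne_one hz1
  · have hfst := huV.1.fst_jet_ae_eq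
    rw [Jfun_eq_rayleighQuotient_jet hq₀ hz hzr, Jfun_eq_rayleighQuotient_jet hq₀ huV.1 hur, hjet]
    exact hmin _ ((memH10_iff_jet_mem_sobolevJets hα₁ hα₂ huV.1).1 huV) (hur.ae_eq hfst.symm)
      fun h => hu0 (hfst.symm.trans ((Lp.eq_zero_iff_ae_eq_zero).1 h))

/-- The functional `J` attains its minimum over
`U = (𝓗₀¹(Ω) ∩ L^{2q}(Ω)) \ {0}`, and the minimizer can be chosen nonnegative
a.e. on `Ω`. -/
theorem J_attains_minimum (α₁ α₂ ppow qe M : ℝ)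
    (hα₁ : α₁ ∈ Ioo (0:ℝ) (1/2)) (hα₂ : α₂ ∈ Ioo (0:ℝ) (1/2))
    (hp : 1 < ppow) (hq : qe = ppow / (ppow - 1)) (hM : 0 < M) :
    ∃ z zx zy : ℝ × ℝ → ℝ, MemU α₁ α₂ qe z zx zy ∧
      (∀ᵐ p ∂(volume.restrict Omega), 0 ≤ z p) ∧
      (∀ u gx gy : ℝ × ℝ → ℝ, MemU α₁ α₂ qe u gx gy →
        Jfun α₁ α₂ M qe z zx zy ≤ Jfun α₁ α₂ M qe u gx gy) :=
  J_attains_minimum_general α₁ α₂ qe M hα₁.2 hα₂.2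
    (by rw [hq, lt_div_iff₀ (sub_pos.2 hp)]; linarith) hM
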